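/- For all integers L₀ ≥ 1 and every ε > 0, there is n₀ = n₀(ε, L₀) such that for every d ∈ [0,1) and every 3-uniform hypergraph G = (V, E) on n ≥ n₀ vertices, there exists a partition of V into V₀, V₁, …, V_L and a spanning subhypergraph G' of G such that: (i) L₀ ≤ L ≤ n₀ and |V₀| ≤ εn; (ii) |V₁| = … = |V_L| =: m; (iii) d_{G'}(v) > d_G(v) − (d + ε)n² for all v ∈ V; (iv) every edge of G' with more than one vertex in a single cluster V_i for some i ∈ [L] has at least one vertex in V₀; (v) for every triple {h, i, j} of distinct indices in [L], the 3-partite subhypergraph (V_h, V_i, V_j)_{G'} consisting of the edges of G' with one vertex in each of V_h, V_i, V_j is either empty or weakly (ε,d)-regular. -/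

import Mathlib

open Finset
open scoped Classical

/-- Number of ordered pairs `(x,y) ∈ A × B` with `{x,y}` an edge of `G`. -/
noncomputable def pairCount {V : Type*} (G : SimpleGraph V) (A B : Finset V) : ℕ :=
  ((A ×ˢ B).filter (fun p => G.Adj p.1 p.2)).card

/-- Number of neighbours of `v` in `B`. -/
noncomputable def degIn {V : Type*} (G : SimpleGraph V) (v : V) (B : Finset V) : ℕ :=
  (B.filter (fun w => G.Adj v w)).card

/-- Degree of `v` in `G`. -/
noncomputable def degOf {V : Type*} [Fintype V] (G : SimpleGraph V) (v : V) : ℕ :=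
  ((univ : Finset V).filter (fun w => G.Adj v w)).card

/-- Number of edges of `G`. -/
noncomputable def edgeCnt {V : Type*} [Fintype V] (G : SimpleGraph V) : ℕ :=
  ((univ : Finset (Sym2 V)).filter (fun e => e ∈ G.edgeSet)).card

/-- Number of edges of `H` with one endpoint in `A` and the other in `B`. -/
noncomputable def eBetween {W : Type*} [Fintype W] (H : SimpleGraph W) (A B : Finset W) : ℕ :=
  ((univ : Finset (Sym2 W)).filter
    (fun e => e ∈ H.edgeSet ∧ ∃ x ∈ A, ∃ y ∈ B, e = s(x, y))).card

/-- A graph `H` on `h` vertices is `μ`-separable if there is `X ⊆ V(H)` with `|X| ≤ μ h`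
such that every connected component of `H - X` has at most `μ h` vertices. -/
def Separable {W : Type*} [Fintype W] (H : SimpleGraph W) (μ : ℝ) : Prop :=
  ∃ X : Finset W, (X.card : ℝ) ≤ μ * (Fintype.card W : ℝ) ∧
    ∀ K : (SimpleGraph.induce ((↑X : Set W)ᶜ) H).ConnectedComponent,
      (K.supp.ncard : ℝ) ≤ μ * (Fintype.card W : ℝ)

/-- A transversal copy of `H` in the graph collection `G`. -/
def HasTransversal {V C W : Type*} (G : C → SimpleGraph V) (H : SimpleGraph W) : Prop :=
  ∃ (τ : W → V) (σ : Sym2 W → C),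
    Function.Injective τ ∧ Set.InjOn σ H.edgeSet ∧
    ∀ x y, H.Adj x y → (G (σ s(x, y))).Adj (τ x) (τ y)

/-- Density of a collection of bipartite graphs. -/
noncomputable def colDensity {V C : Type*} (G : C → SimpleGraph V)
    (A B : Finset V) (D : Finset C) : ℝ :=
  (∑ c ∈ D, (pairCount (G c) A B : ℝ)) / ((D.card : ℝ) * (A.card : ℝ) * (B.card : ℝ))

/-- `(ε,d)`-regularity of a collection of bipartite graphs with parts `V₁, V₂`
and colour set `D`. -/
def ColReg {V C : Type*} (ε d : ℝ) (G : C → SimpleGraph V)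
    (V₁ V₂ : Finset V) (D : Finset C) : Prop :=
  d ≤ colDensity G V₁ V₂ D ∧
  ∀ V₁' ⊆ V₁, ∀ V₂' ⊆ V₂, ∀ D' ⊆ D,
    ε * (V₁.card : ℝ) ≤ (V₁'.card : ℝ) → ε * (V₂.card : ℝ) ≤ (V₂'.card : ℝ) →
    ε * (D.card : ℝ) ≤ (D'.card : ℝ) →
    |colDensity G V₁' V₂' D' - colDensity G V₁ V₂ D| < ε

/-- `(ε,d)`-superregularity of a collection of bipartite graphs. -/
def ColSuperReg {V C : Type*} (ε d : ℝ) (G : C → SimpleGraph V)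
    (V₁ V₂ : Finset V) (D : Finset C) : Prop :=
  ColReg ε d G V₁ V₂ D ∧
  (∀ v ∈ V₁, d * (V₂.card : ℝ) * (D.card : ℝ) ≤ ∑ c ∈ D, (degIn (G c) v V₂ : ℝ)) ∧
  (∀ v ∈ V₂, d * (V₁.card : ℝ) * (D.card : ℝ) ≤ ∑ c ∈ D, (degIn (G c) v V₁ : ℝ)) ∧
  (∀ c ∈ D, d * (V₁.card : ℝ) * (V₂.card : ℝ) ≤ (pairCount (G c) V₁ V₂ : ℝ))

/-- `(ε,d)`-half-superregularity of a collection of bipartite graphs. -/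
def ColHalfSuperReg {V C : Type*} (ε d : ℝ) (G : C → SimpleGraph V)
    (V₁ V₂ : Finset V) (D : Finset C) : Prop :=
  (∀ V₁' ⊆ V₁, ∀ V₂' ⊆ V₂, ∀ D' ⊆ D,
    ε * (V₁.card : ℝ) ≤ (V₁'.card : ℝ) → ε * (V₂.card : ℝ) ≤ (V₂'.card : ℝ) →
    ε * (D.card : ℝ) ≤ (D'.card : ℝ) →
    d * (D'.card : ℝ) * (V₁'.card : ℝ) * (V₂'.card : ℝ) ≤
      ∑ c ∈ D', (pairCount (G c) V₁' V₂' : ℝ)) ∧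
  (∀ v ∈ V₁, d * (V₂.card : ℝ) * (D.card : ℝ) ≤ ∑ c ∈ D, (degIn (G c) v V₂ : ℝ)) ∧
  (∀ v ∈ V₂, d * (V₁.card : ℝ) * (D.card : ℝ) ≤ ∑ c ∈ D, (degIn (G c) v V₁ : ℝ)) ∧
  (∀ c ∈ D, d * (V₁.card : ℝ) * (V₂.card : ℝ) ≤ (pairCount (G c) V₁ V₂ : ℝ))

/-- `(ε,d)`-half-superregularity of a bipartite graph (given by an adjacency relation)
with parts `V₁, V₂`. -/
def BipHalfSuper {V : Type*} (ε d : ℝ) (A : V → V → Prop) (V₁ V₂ : Finset V) : Prop :=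
  (∀ U₁ ⊆ V₁, ∀ U₂ ⊆ V₂,
    ε * (V₁.card : ℝ) ≤ (U₁.card : ℝ) → ε * (V₂.card : ℝ) ≤ (U₂.card : ℝ) →
    d * (U₁.card : ℝ) * (U₂.card : ℝ) ≤
      (((U₁ ×ˢ U₂).filter (fun p => A p.1 p.2)).card : ℝ)) ∧
  (∀ x ∈ V₁, d * (V₂.card : ℝ) ≤ ((V₂.filter (fun y => A x y)).card : ℝ)) ∧
  (∀ y ∈ V₂, d * (V₁.card : ℝ) ≤ ((V₁.filter (fun x => A x y)).card : ℝ))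

/-- Number of ordered triples `(x₁,x₂,x₃) ∈ U₁ × U₂ × U₃` with `{x₁,x₂,x₃}` an edge. -/
noncomputable def tripCount {V : Type*} (E : Set (Finset V)) (U₁ U₂ U₃ : Finset V) : ℕ :=
  ((U₁ ×ˢ U₂ ×ˢ U₃).filter
    (fun p => ({p.1, p.2.1, p.2.2} : Finset V) ∈ E)).card

/-- Density of the triple `(U₁,U₂,U₃)` in a `3`-graph. -/
noncomputable def tripDensity {V : Type*} (E : Set (Finset V)) (U₁ U₂ U₃ : Finset V) : ℝ :=
  (tripCount E U₁ U₂ U₃ : ℝ) / ((U₁.card : ℝ) * (U₂.card : ℝ) * (U₃.card : ℝ))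

/-- Degree of a vertex in a hypergraph: the number of edges containing it. -/
noncomputable def hDeg {V : Type*} [Fintype V] (E : Set (Finset V)) (v : V) : ℕ :=
  ((univ : Finset (Finset V)).filter (fun e => e ∈ E ∧ v ∈ e)).card

/-- Weak `(ε,d)`-regularity of a 3-partite triple in a 3-graph. -/
def TripReg {V : Type*} (ε d : ℝ) (E : Set (Finset V)) (V₁ V₂ V₃ : Finset V) : Prop :=
  d ≤ tripDensity E V₁ V₂ V₃ ∧
  ∀ U₁ ⊆ V₁, ∀ U₂ ⊆ V₂, ∀ U₃ ⊆ V₃,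
    ε * (V₁.card : ℝ) ≤ (U₁.card : ℝ) → ε * (V₂.card : ℝ) ≤ (U₂.card : ℝ) →
    ε * (V₃.card : ℝ) ≤ (U₃.card : ℝ) →
    |tripDensity E U₁ U₂ U₃ - tripDensity E V₁ V₂ V₃| < ε

/-- Weak `(ε,d)`-half-superregularity of a 3-partite triple in a 3-graph. -/
def TripHalfSuper {V : Type*} (ε d : ℝ) (E : Set (Finset V)) (V₁ V₂ V₃ : Finset V) : Prop :=
  (∀ U₁ ⊆ V₁, ∀ U₂ ⊆ V₂, ∀ U₃ ⊆ V₃,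
    ε * (V₁.card : ℝ) ≤ (U₁.card : ℝ) → ε * (V₂.card : ℝ) ≤ (U₂.card : ℝ) →
    ε * (V₃.card : ℝ) ≤ (U₃.card : ℝ) →
    d * (U₁.card : ℝ) * (U₂.card : ℝ) * (U₃.card : ℝ) ≤ (tripCount E U₁ U₂ U₃ : ℝ)) ∧
  (∀ x ∈ V₁, d * (V₂.card : ℝ) * (V₃.card : ℝ) ≤ (tripCount E {x} V₂ V₃ : ℝ)) ∧
  (∀ y ∈ V₂, d * (V₁.card : ℝ) * (V₃.card : ℝ) ≤ (tripCount E V₁ {y} V₃ : ℝ)) ∧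
  (∀ z ∈ V₃, d * (V₁.card : ℝ) * (V₂.card : ℝ) ≤ (tripCount E V₁ V₂ {z} : ℝ))

/-- A copy of the 1-expansion of `H` in a 3-graph with edge set `E`. -/
def HasExpansionCopy {V W : Type*} (E : Set (Finset V)) (H : SimpleGraph W) : Prop :=
  ∃ (ρv : W → V) (ρe : Sym2 W → V),
    Function.Injective ρv ∧ Set.InjOn ρe H.edgeSet ∧
    (∀ x, ∀ e ∈ H.edgeSet, ρv x ≠ ρe e) ∧
    ∀ x y, H.Adj x y → ({ρv x, ρv y, ρe s(x, y)} : Finset V) ∈ E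

/-- Number of edges (as functions picking one vertex per part) inside the sets `U i`. -/
noncomputable def kCount {V : Type*} {k : ℕ} (E : Set (Fin k → V)) (U : Fin k → Finset V) : ℕ :=
  ((Fintype.piFinset U).filter (fun e => e ∈ E)).card

/-- Density of a `k`-tuple in a `k`-partite `k`-graph. -/
noncomputable def kDensity {V : Type*} {k : ℕ} (E : Set (Fin k → V)) (U : Fin k → Finset V) : ℝ :=
  (kCount E U : ℝ) / ∏ i, ((U i).card : ℝ)

/-- Degree of `x` as a vertex of the `i`-th part of a `k`-partite `k`-graph. -/
noncomputable def kDegAt {V : Type*} [Fintype V] {k : ℕ} (E : Set (Fin k → V))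
    (i : Fin k) (x : V) : ℕ :=
  ((univ : Finset (Fin k → V)).filter (fun e => e ∈ E ∧ e i = x)).card

/-- Weak ε-regularity of a `k`-tuple in a `k`-partite `k`-graph. -/
def KTupleReg {V : Type*} {k : ℕ} (ε : ℝ) (E : Set (Fin k → V)) (Wp : Fin k → Finset V) : Prop :=
  ∀ U : Fin k → Finset V, (∀ i, U i ⊆ Wp i) →
    (∀ i, ε * ((Wp i).card : ℝ) ≤ ((U i).card : ℝ)) →
    |kDensity E U - kDensity E Wp| < ε

/-- Weak `(ε,d)`-regularity of a `k`-partite `k`-graph with parts `P`. -/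
def KReg {V : Type*} {k : ℕ} (ε d : ℝ) (E : Set (Fin k → V)) (P : Fin k → Finset V) : Prop :=
  d ≤ kDensity E P ∧
  ∀ U : Fin k → Finset V, (∀ i, U i ⊆ P i) →
    (∀ i, ε * ((P i).card : ℝ) ≤ ((U i).card : ℝ)) →
    |kDensity E U - kDensity E P| < ε

/-- Weak `(ε,d)`-superregularity of a `k`-partite `k`-graph with parts `P`. -/
def KSuper {V : Type*} [Fintype V] {k : ℕ} (ε d : ℝ) (E : Set (Fin k → V))
    (P : Fin k → Finset V) : Prop :=
  KReg ε d E P ∧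
  ∀ i, ∀ x ∈ P i, d * (∏ j, ((P j).card : ℝ)) / ((P i).card : ℝ) ≤ (kDegAt E i x : ℝ)

/-- Weak `(ε,d)`-half-superregularity of a `k`-partite `k`-graph with parts `P`. -/
def KHalfSuper {V : Type*} [Fintype V] {k : ℕ} (ε d : ℝ) (E : Set (Fin k → V))
    (P : Fin k → Finset V) : Prop :=
  (∀ U : Fin k → Finset V, (∀ i, U i ⊆ P i) →
    (∀ i, ε * ((P i).card : ℝ) ≤ ((U i).card : ℝ)) →
    d ≤ kDensity E U) ∧
  ∀ i, ∀ x ∈ P i, d * (∏ j, ((P j).card : ℝ)) / ((P i).card : ℝ) ≤ (kDegAt E i x : ℝ)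

/-- An `R`-template: vertex clusters `Vc`, colour clusters `Cc i j` (one for each
edge `ij` of `R`), and for each colour `c ∈ Cc i j` a bipartite graph `Ge c i j`
with parts `Vc i`, `Vc j`.  The graph `G_c` of the collection is the union of the
`Ge c i j` over the edges `ij` of `R` whose colour cluster contains `c`. -/
structure GTemplate (V C : Type*) (r : ℕ) where
  R : SimpleGraph (Fin r)
  Vc : Fin r → Finset V
  Cc : Fin r → Fin r → Finset C
  Ge : C → Fin r → Fin r → SimpleGraph V
  Cc_symm : ∀ i j, Cc i j = Cc j i
  Ge_symm : ∀ c i j, Ge c i j = Ge c j i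
  Vc_disj : ∀ i j, i ≠ j → Disjoint (Vc i) (Vc j)
  Cc_support : ∀ i j, ¬ R.Adj i j → Cc i j = ∅
  Ge_support : ∀ c i j, c ∉ Cc i j → Ge c i j = ⊥
  Ge_bipartite : ∀ c i j x y, (Ge c i j).Adj x y →
    (x ∈ Vc i ∧ y ∈ Vc j) ∨ (x ∈ Vc j ∧ y ∈ Vc i)

namespace GTemplate

variable {V C : Type*} {r : ℕ}

/-- The graph `G_c` of the template: the union of the bipartite pieces. -/
noncomputable def Gc (T : GTemplate V C r) (c : C) : SimpleGraph V :=
  ⨆ i, ⨆ j, T.Ge c i j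

/-- `T` is an `R`-template with parameters `(m, ε, d, δ)`. -/
def IsParam (T : GTemplate V C r) (m ε d δ : ℝ) : Prop :=
  (∀ j, m ≤ ((T.Vc j).card : ℝ) ∧ ((T.Vc j).card : ℝ) ≤ m / δ) ∧
  (∀ i j, T.R.Adj i j → δ * m ≤ ((T.Cc i j).card : ℝ)) ∧
  (∀ i j, T.R.Adj i j →
    ColReg ε d (fun c => T.Ge c i j) (T.Vc i) (T.Vc j) (T.Cc i j))

/-- `T` is a super `R`-template with parameters `(m, ε, d, δ)`. -/
def IsSuperParam (T : GTemplate V C r) (m ε d δ : ℝ) : Prop :=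
  (∀ j, m ≤ ((T.Vc j).card : ℝ) ∧ ((T.Vc j).card : ℝ) ≤ m / δ) ∧
  (∀ i j, T.R.Adj i j → δ * m ≤ ((T.Cc i j).card : ℝ)) ∧
  (∀ i j, T.R.Adj i j →
    ColSuperReg ε d (fun c => T.Ge c i j) (T.Vc i) (T.Vc j) (T.Cc i j))

/-- `T` is a half-super `R`-template with parameters `(m, ε, d, δ)`. -/
def IsHalfSuperParam (T : GTemplate V C r) (m ε d δ : ℝ) : Prop :=
  (∀ j, m ≤ ((T.Vc j).card : ℝ) ∧ ((T.Vc j).card : ℝ) ≤ m / δ) ∧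
  (∀ i j, T.R.Adj i j → δ * m ≤ ((T.Cc i j).card : ℝ)) ∧
  (∀ i j, T.R.Adj i j →
    ColHalfSuperReg ε d (fun c => T.Ge c i j) (T.Vc i) (T.Vc j) (T.Cc i j))

/-- `T` is a semi-super `R`-template with parameters `(m, ε, d, δ)`. -/
def IsSemiSuperParam (T : GTemplate V C r) (m ε d δ : ℝ) : Prop :=
  T.IsParam m ε d δ ∧
  ∀ i j, T.R.Adj i j →
    (∀ v ∈ T.Vc i, d * ((T.Vc j).card : ℝ) * ((T.Cc i j).card : ℝ) ≤
      ∑ c ∈ T.Cc i j, (degIn (T.Ge c i j) v (T.Vc j) : ℝ)) ∧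
    (∀ v ∈ T.Vc j, d * ((T.Vc i).card : ℝ) * ((T.Cc i j).card : ℝ) ≤
      ∑ c ∈ T.Cc i j, (degIn (T.Ge c i j) v (T.Vc i) : ℝ))

/-- The template is rainbow: the colour clusters are pairwise disjoint. -/
def Rainbow (T : GTemplate V C r) : Prop :=
  ∀ i j k l, T.R.Adj i j → T.R.Adj k l → s(i, j) ≠ s(k, l) →
    Disjoint (T.Cc i j) (T.Cc k l)

/-- Adjacency in the `l`-thick graph of the template, between clusters `i` and `j`. -/
def ThickAdj (T : GTemplate V C r) (l : ℝ) (i j : Fin r) (x y : V) : Prop :=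
  l * ((T.Cc i j).card : ℝ) ≤
    (((T.Cc i j).filter (fun c => (T.Ge c i j).Adj x y)).card : ℝ)

end GTemplate

/-!
Cut the classes of a colouring `c` of the vertices into equal parts. The energy of `c` is the mean
square of the conditional expectation of the edge indicator on `V ^ k` given the colours of the
entries. If many `k`-tuples of parts are irregular, then recording for each of them the subsets that
witness its irregularity raises the energy by a fixed amount, since conditional expectation is an
orthogonal projection; as the energy is at most `1`, this stops after boundedly many steps.

Averaging alone only bounds the total number of lost edges, while the degree condition is about each
vertex. So one further discards the clusters lying in many irregular tuples, and in each remaining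
cluster the few vertices having, for many regular tuples, a link noticeably denser than the tuple:
such vertices are few because a large set of them would violate regularity. A surviving vertex loses
edges only to irregular tuples, to atypical links, to tuples repeating a cluster and to tuples of
density about `d` or less. Vertices of the exceptional cluster lose nothing, as every edge
meeting it is kept.
-/

open Function
open scoped BigOperators

section Energy

variable {X K K' : Type*} [Fintype X] {κ : X → K} {κ' : X → K'} {F : X → ℝ}

/-- The conditional expectation of `F` given the colouring `κ`: at `x`, the average of `F` over the
colour class of `x`. Colourings play the role of partitions, and a refinement of `κ` is a colouring
`κ'` with `κ.FactorsThrough κ'`. -/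
noncomputable def fiberAvg (κ : X → K) (F : X → ℝ) (x : X) : ℝ := 𝔼 y with κ y = κ x, F y

/-- The energy of `F` relative to the colouring `κ`: the mean square of its fibre averages. -/
noncomputable def energy (κ : X → K) (F : X → ℝ) : ℝ := 𝔼 x, fiberAvg κ F x ^ 2

lemma fiberAvg_factorsThrough : (fiberAvg κ F).FactorsThrough κ := fun x y h ↦ by
  simp only [fiberAvg, h]

lemma fiberAvg_mul_right {h : X → ℝ} (hh : h.FactorsThrough κ) (x : X) :
    fiberAvg κ F x * h x = fiberAvg κ (fun y ↦ F y * h y) x := by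
  rw [fiberAvg, fiberAvg, expect_mul]
  exact expect_congr rfl fun y hy ↦ by rw [hh (mem_filter.1 hy).2]

lemma sum_fiberAvg : ∑ x, fiberAvg κ F x = ∑ x, F x := by
  have hmaps : ∀ x ∈ (univ : Finset X), κ x ∈ univ.image κ := fun x _ ↦
    mem_image_of_mem κ (mem_univ x)
  rw [← sum_fiberwise_of_maps_to hmaps, ← sum_fiberwise_of_maps_to hmaps]
  refine sum_congr rfl fun a _ ↦ ?_
  have hconst : ∀ x ∈ ({x | κ x = a} : Finset X), fiberAvg κ F x = 𝔼 y with κ y = a, F y :=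
    fun x hx ↦ by rw [fiberAvg, (mem_filter.1 hx).2]
  rw [sum_congr rfl hconst, sum_const, card_smul_expect]

lemma sum_fiberAvg_mul {h : X → ℝ} (hh : h.FactorsThrough κ) :
    ∑ x, fiberAvg κ F x * h x = ∑ x, F x * h x := by
  simp only [fiberAvg_mul_right hh, sum_fiberAvg]

lemma sum_fiberAvg_of_factorsThrough {S : Finset X} (hS : (· ∈ S).FactorsThrough κ) :
    ∑ x ∈ S, fiberAvg κ F x = ∑ x ∈ S, F x := by
  simpa [sum_ite_mem] using
    sum_fiberAvg_mul (F := F) (hS.comp_left fun p : Prop ↦ if p then (1 : ℝ) else 0)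

lemma energy_eq_add_of_factorsThrough (h : κ.FactorsThrough κ') :
    energy κ' F = energy κ F + 𝔼 x, (fiberAvg κ' F x - fiberAvg κ F x) ^ 2 := by
  have hcoarse : (fiberAvg κ F).FactorsThrough κ' := fun _ _ hxy ↦ fiberAvg_factorsThrough (h hxy)
  have horth : 𝔼 x, fiberAvg κ' F x * fiberAvg κ F x = energy κ F := by
    simp only [energy, sq, Fintype.expect_eq_sum_div_card, sum_fiberAvg_mul hcoarse,
      sum_fiberAvg_mul fiberAvg_factorsThrough]
  have hexpand : ∀ x, (fiberAvg κ' F x - fiberAvg κ F x) ^ 2 =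
      fiberAvg κ' F x ^ 2 - 2 * (fiberAvg κ' F x * fiberAvg κ F x) + fiberAvg κ F x ^ 2 :=
    fun x ↦ by ring
  simp only [hexpand, expect_add_distrib, expect_sub_distrib, ← mul_expect, horth]
  simp only [energy]
  ring

lemma energy_mono (h : κ.FactorsThrough κ') : energy κ F ≤ energy κ' F := by
  rw [energy_eq_add_of_factorsThrough h]
  exact le_add_of_nonneg_right (expect_nonneg fun x _ ↦ sq_nonneg _)

lemma energy_nonneg : 0 ≤ energy κ F := expect_nonneg fun _ _ ↦ sq_nonneg _

lemma energy_le_one (hF : ∀ x, |F x| ≤ 1) : energy κ F ≤ 1 := by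
  cases isEmpty_or_nonempty X with
  | inl _ => simp [energy]
  | inr _ =>
    refine expect_le univ_nonempty fun x _ ↦ (sq_le_one_iff_abs_le_one _).2 ?_
    exact (abs_expect_le _ _).trans (expect_le ⟨x, by simp⟩ fun y _ ↦ hF y)

lemma sq_expect_le_expect_sq {ι : Type*} (s : Finset ι) (f : ι → ℝ) :
    (𝔼 i ∈ s, f i) ^ 2 ≤ 𝔼 i ∈ s, f i ^ 2 := by
  rcases s.eq_empty_or_nonempty with rfl | hs
  · simp
  · simpa [expect_const hs] using expect_mul_sq_le_sq_mul_sq s f 1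

lemma card_mul_sq_expect_sub_fiberAvg_le {S : Finset X} (hS : (· ∈ S).FactorsThrough κ') :
    #S * (𝔼 x ∈ S, (F x - fiberAvg κ F x)) ^ 2 ≤
      ∑ x ∈ S, (fiberAvg κ' F x - fiberAvg κ F x) ^ 2 := by
  have hmean : 𝔼 x ∈ S, (F x - fiberAvg κ F x) = 𝔼 x ∈ S, (fiberAvg κ' F x - fiberAvg κ F x) := by
    simp only [expect_eq_sum_div_card, sum_sub_distrib, sum_fiberAvg_of_factorsThrough hS]
  rw [hmean, ← card_mul_expect]
  exact mul_le_mul_of_nonneg_left (sq_expect_le_expect_sq _ _) (Nat.cast_nonneg _)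

lemma energy_add_le_of_le_abs_expect_sub {ι : Type*} {I : Finset ι} {S : ι → Finset X} {s δ : ℝ}
    (hκ : κ.FactorsThrough κ') (hδ : 0 ≤ δ) (hdisj : (I : Set ι).PairwiseDisjoint S)
    (hS : ∀ t ∈ I, (· ∈ S t).FactorsThrough κ') (hcard : ∀ t ∈ I, s ≤ #(S t))
    (hdev : ∀ t ∈ I, δ ≤ |𝔼 x ∈ S t, (F x - fiberAvg κ F x)|) :
    energy κ F + #I * (s * δ ^ 2) / Fintype.card X ≤ energy κ' F := by
  have hgain : ∀ t ∈ I, s * δ ^ 2 ≤ ∑ x ∈ S t, (fiberAvg κ' F x - fiberAvg κ F x) ^ 2 := fun t ht ↦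
    calc s * δ ^ 2 ≤ #(S t) * (𝔼 x ∈ S t, (F x - fiberAvg κ F x)) ^ 2 := by
          rw [← sq_abs (𝔼 x ∈ S t, _)]
          gcongr
          exacts [hcard t ht, hdev t ht]
      _ ≤ _ := card_mul_sq_expect_sub_fiberAvg_le (hS t ht)
  rw [energy_eq_add_of_factorsThrough hκ, Fintype.expect_eq_sum_div_card, ← nsmul_eq_mul]
  gcongr
  calc #I • (s * δ ^ 2) ≤ ∑ t ∈ I, ∑ x ∈ S t, (fiberAvg κ' F x - fiberAvg κ F x) ^ 2 :=
        card_nsmul_le_sum _ _ _ hgain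
    _ = ∑ x ∈ I.biUnion S, (fiberAvg κ' F x - fiberAvg κ F x) ^ 2 := (sum_biUnion hdisj).symm
    _ ≤ ∑ x, (fiberAvg κ' F x - fiberAvg κ F x) ^ 2 :=
        sum_le_sum_of_subset_of_nonneg (subset_univ _) fun _ _ _ ↦ sq_nonneg _

end Energy

section Coloring

variable {V K J : Type*}

/-- The colouring `c` refined by the family `A`: it also records which sets of `A` contain a given
point. -/
def refineBy (c : V → K) (A : J → Finset V) (v : V) : K × Set J := (c v, {j | v ∈ A j})

lemma refineBy_eq_iff {c : V → K} {A : J → Finset V} {v w : V} :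
    refineBy c A v = refineBy c A w ↔ c v = c w ∧ ∀ j, v ∈ A j ↔ w ∈ A j := by
  simp [refineBy, Prod.ext_iff, Set.ext_iff]

/-- All points of `A` receive the same colour. -/
def IsMonochromatic (c : V → K) (A : Finset V) : Prop := ∀ v ∈ A, ∀ w ∈ A, c v = c w

lemma IsMonochromatic.subset {c : V → K} {A B : Finset V} (hB : IsMonochromatic c B) (h : A ⊆ B) :
    IsMonochromatic c A := fun v hv w hw ↦ hB v (h hv) w (h hw)

lemma isMonochromatic_filter_eq (c : V → K) (S : Finset V) (a : K) :
    IsMonochromatic c {v ∈ S | c v = a} := fun _ hv _ hw ↦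
  (mem_filter.1 hv).2.trans (mem_filter.1 hw).2.symm

lemma refineBy_eq_iff_mem {c : V → K} {P : J → Finset V} (hc : ∀ j, IsMonochromatic c (P j))
    (hP : Pairwise (Disjoint on P)) {j : J} {v w : V} (hv : v ∈ P j) :
    refineBy c P w = refineBy c P v ↔ w ∈ P j := by
  rw [refineBy_eq_iff]
  refine ⟨fun h ↦ (h.2 j).2 hv, fun hw ↦ ⟨hc j w hw v hv, fun i ↦ ?_⟩⟩
  rcases eq_or_ne i j with rfl | hij
  · simp [hv, hw]
  · simp [disjoint_right.1 (hP hij) hv, disjoint_right.1 (hP hij) hw]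

lemma exists_disjoint_monochromatic_subsets [Fintype K] (c : V → K) {m : ℕ} (hm : 0 < m)
    (S : Finset V) :
    ∃ Q : Finset (Finset V), (∀ A ∈ Q, A ⊆ S ∧ #A = m ∧ IsMonochromatic c A) ∧
      (Q : Set (Finset V)).PairwiseDisjoint id ∧ #S ≤ #Q * m + Fintype.card K * m := by
  induction S using Finset.strongInduction with
  | H S ih =>
    rcases le_or_gt (#S) (Fintype.card K * m) with hle | hlt
    · exact ⟨∅, by simp, by simp, by simpa using hle⟩
    obtain ⟨a, -, ha⟩ := exists_lt_card_fiber_of_mul_lt_card_of_maps_to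
      (fun v _ ↦ mem_univ (c v)) hlt
    obtain ⟨A, hA, hAm⟩ := exists_subset_card_eq ha.le
    have hAS : A ⊆ S := hA.trans (filter_subset _ _)
    have hAne : A.Nonempty := card_pos.1 (hAm ▸ hm)
    obtain ⟨Q, hQ, hdisj, hcard⟩ := ih (S \ A) (sdiff_ssubset hAS hAne)
    have hQA : ∀ B ∈ Q, Disjoint A B := fun B hB ↦ disjoint_sdiff.mono_right (hQ B hB).1
    have hAQ : A ∉ Q := fun h ↦ hAne.ne_empty (disjoint_self.1 (hQA A h))
    refine ⟨insert A Q, ?_, ?_, ?_⟩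
    · refine forall_mem_insert .. |>.2 ⟨⟨hAS, hAm, (isMonochromatic_filter_eq c S a).subset hA⟩, ?_⟩
      exact fun B hB ↦ ⟨(hQ B hB).1.trans sdiff_subset, (hQ B hB).2⟩
    · rw [coe_insert]
      exact hdisj.insert fun B hB _ ↦ hQA B hB
    · rw [card_sdiff_of_subset hAS, hAm] at hcard
      rw [card_insert_of_notMem hAQ, add_mul, one_mul]
      lia

end Coloring

section NearPartition

variable {V : Type*} {L m : ℕ} {P : Fin L → Finset V}

lemma card_biUnion_of_card_eq (hcard : ∀ l, #(P l) = m) (hdisj : Pairwise (Disjoint on P)) :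
    #(univ.biUnion P) = L * m := by
  rw [card_biUnion fun i _ j _ hij ↦ hdisj hij, sum_const_nat fun l _ ↦ hcard l, card_univ,
    Fintype.card_fin]

variable [Fintype V] {δ : ℝ}

/-- The sets `P l` are pairwise disjoint, all of size `m`, and leave at most a proportion `δ` of
the points uncovered. -/
structure IsNearPartition (δ : ℝ) (P : Fin L → Finset V) (m : ℕ) : Prop where
  card_eq : ∀ l, #(P l) = m
  disjoint : Pairwise (Disjoint on P)
  le_mul : (1 - δ) * Fintype.card V ≤ L * m

lemma IsNearPartition.mul_le (hP : IsNearPartition δ P m) : (L * m : ℝ) ≤ Fintype.card V := by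
  exact_mod_cast card_biUnion_of_card_eq hP.card_eq hP.disjoint ▸ card_le_univ (univ.biUnion P)

lemma exists_disjoint_monochromatic_parts {K : Type*} [Fintype K] (c : V → K) (hm : 0 < m) :
    ∃ (L : ℕ) (P : Fin L → Finset V), (∀ l, #(P l) = m) ∧ (∀ l, IsMonochromatic c (P l)) ∧
      Pairwise (Disjoint on P) ∧ Fintype.card V ≤ L * m + Fintype.card K * m := by
  obtain ⟨Q, hQ, hdisj, hcard⟩ := exists_disjoint_monochromatic_subsets c hm univ
  refine ⟨#Q, fun l ↦ Q.equivFin.symm l, fun l ↦ (hQ _ (coe_mem _)).2.1,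
    fun l ↦ (hQ _ (coe_mem _)).2.2, fun i j hij ↦ ?_, by simpa using hcard⟩
  exact hdisj (coe_mem _) (coe_mem _) (Subtype.coe_injective.ne (Q.equivFin.symm.injective.ne hij))

lemma exists_monochromatic_isNearPartition (hδ : 0 < δ) (hδ' : δ ≤ 1 / 2) (L₀ M : ℕ) :
    ∃ N : ℕ, ∀ (V : Type*) [Fintype V], N ≤ Fintype.card V → ∀ c : V → Fin M,
      ∃ (L m : ℕ) (P : Fin L → Finset V), L₀ ≤ L ∧ L ≤ N ∧ (∀ l, IsMonochromatic c (P l)) ∧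
        IsNearPartition δ P m := by
  set q : ℝ := M + L₀ + 1
  have hq0 : 0 < q := by positivity
  refine ⟨⌈2 * q / δ⌉₊, fun V _ hV c ↦ ?_⟩
  set n : ℝ := ↑(Fintype.card V)
  have hNn : 2 * q / δ ≤ n := (Nat.le_ceil _).trans (Nat.cast_le.2 hV)
  have hn0 : 0 < n := (by positivity : 0 < 2 * q / δ).trans_le hNn
  set m : ℕ := ⌊δ * n / q⌋₊
  have hquot : 2 ≤ δ * n / q := by
    rw [div_le_iff₀ hδ] at hNn
    rw [le_div_iff₀ hq0]
    linarith
  have hm_le : q * m ≤ δ * n := by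
    rw [mul_comm, ← le_div_iff₀ hq0]
    exact Nat.floor_le (by positivity)
  have hm_ge : δ * n ≤ 2 * q * m := by
    have : δ * n / q < m + 1 := Nat.lt_floor_add_one _
    rw [mul_comm 2, mul_assoc, ← div_le_iff₀' hq0]
    linarith
  have hm0 : 0 < m := Nat.floor_pos.2 (by linarith)
  obtain ⟨L, P, hcard, hmono, hdisj, hcover⟩ := exists_disjoint_monochromatic_parts c hm0
  have hmR : (0 : ℝ) < m := by exact_mod_cast hm0
  have hcover' : n ≤ L * m + M * m := by
    simpa [n] using (Nat.cast_le (α := ℝ)).2 hcover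
  have hle : (1 - δ) * n ≤ L * m := by nlinarith [(Nat.cast_nonneg L₀ : (0 : ℝ) ≤ L₀)]
  have hP : IsNearPartition δ P m := ⟨hcard, hdisj, hle⟩
  refine ⟨L, m, P, ?_, ?_, hmono, hP⟩
  · have : q ≤ L := le_of_mul_le_mul_right (by nlinarith : q * m ≤ L * m) hmR
    exact_mod_cast (by linarith [(Nat.cast_nonneg M : (0 : ℝ) ≤ M)] : (L₀ : ℝ) ≤ L)
  · suffices (L : ℝ) ≤ 2 * q / δ by exact_mod_cast this.trans (Nat.le_ceil _)
    rw [le_div_iff₀ hδ]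
    refine le_of_mul_le_mul_right ?_ hn0
    calc L * δ * n = L * (δ * n) := mul_assoc _ _ _
      _ ≤ L * (2 * q * m) := by gcongr
      _ = 2 * q * (L * m) := by ring
      _ ≤ 2 * q * n := by gcongr; exact hP.mul_le

end NearPartition

section EnergyIncrement

variable {V K : Type*} {k L m : ℕ} {E : Set (Fin k → V)} {P : Fin L → Finset V} {δ : ℝ}

lemma kDensity_eq_expect (E : Set (Fin k → V)) (U : Fin k → Finset V) :
    kDensity E U = 𝔼 x ∈ Fintype.piFinset U, E.indicator 1 x := by
  simp [kDensity, kCount, expect_eq_sum_div_card, Set.indicator_apply, Fintype.card_piFinset]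

/-- The index tuples `t` for which the tuple of parts `P ∘ t` is not weakly `δ`-regular. -/
noncomputable def irregularTuples (δ : ℝ) (E : Set (Fin k → V)) (P : Fin L → Finset V) :
    Finset (Fin k → Fin L) :=
  {t | ¬KTupleReg δ E (P ∘ t)}

lemma exists_le_abs_kDensity_sub_of_mem_irregularTuples (hcard : ∀ l, #(P l) = m)
    {t : Fin k → Fin L} (ht : t ∈ irregularTuples δ E P) :
    ∃ U : Fin k → Finset V, (∀ i, U i ⊆ P (t i)) ∧ (∀ i, δ * m ≤ #(U i)) ∧
      δ ≤ |kDensity E U - kDensity E (P ∘ t)| := by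
  simpa [irregularTuples, KTupleReg, hcard] using ht

lemma piFinset_factorsThrough_refineBy {J : Type*} (c : V → K) (A : J → Finset V)
    (j : Fin k → J) :
    (· ∈ Fintype.piFinset fun i ↦ A (j i)).FactorsThrough fun x ↦ refineBy c A ∘ x := fun x y h ↦ by
  have hxy : ∀ i, x i ∈ A (j i) ↔ y i ∈ A (j i) := fun i ↦ (refineBy_eq_iff.1 (congrFun h i)).2 _
  simp only [Fintype.mem_piFinset, hxy]

lemma comp_factorsThrough_of_factorsThrough {K' : Type*} {c : V → K} {c' : V → K'}
    (h : c.FactorsThrough c') :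
    (fun x : Fin k → V ↦ c ∘ x).FactorsThrough fun x ↦ c' ∘ x := fun _ _ hxy ↦
  funext fun i ↦ h (congrFun hxy i)

lemma factorsThrough_refineBy {J : Type*} (c : V → K) (A : J → Finset V) :
    c.FactorsThrough (refineBy c A) := fun _ _ h ↦ congrArg Prod.fst h

variable [Fintype V]

lemma fiberAvg_refineBy_eq_kDensity {c : V → K} (hc : ∀ l, IsMonochromatic c (P l))
    (hP : Pairwise (Disjoint on P)) {t : Fin k → Fin L} {x : Fin k → V}
    (hx : x ∈ Fintype.piFinset (P ∘ t)) :
    fiberAvg (fun x ↦ refineBy c P ∘ x) (E.indicator 1) x = kDensity E (P ∘ t) := by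
  rw [fiberAvg, kDensity_eq_expect]
  congr 1
  ext y
  simp only [mem_filter_univ, Fintype.mem_piFinset, funext_iff, comp_apply]
  exact forall_congr' fun i ↦ refineBy_eq_iff_mem hc hP (Fintype.mem_piFinset.1 hx i)

lemma exists_energy_add_le_of_irregularTuples {c : V → K} (hc : ∀ l, IsMonochromatic c (P l))
    (hcard : ∀ l, #(P l) = m) (hP : Pairwise (Disjoint on P)) (hm : 0 < m) (hδ : 0 < δ) :
    ∃ A : (Fin k → Fin L) × Fin k → Finset V,
      energy (fun x : Fin k → V ↦ c ∘ x) (E.indicator 1) +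
          #(irregularTuples δ E P) * ((δ * m) ^ k * δ ^ 2) / Fintype.card V ^ k ≤
        energy (fun x : Fin k → V ↦ refineBy (refineBy c P) A ∘ x) (E.indicator 1) := by
  choose! U hUP hUm hUδ using fun t (ht : t ∈ irregularTuples δ E P) ↦
    exists_le_abs_kDensity_sub_of_mem_irregularTuples hcard ht
  have hne : ∀ t ∈ irregularTuples δ E P, (Fintype.piFinset (U t)).Nonempty := fun t ht ↦ by
    refine Fintype.piFinset_nonempty.2 fun i ↦ card_pos.1 ?_
    exact_mod_cast (by positivity : (0 : ℝ) < δ * m).trans_le (hUm t ht i)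
  have hmono : energy (fun x : Fin k → V ↦ c ∘ x) (E.indicator 1) ≤
      energy (fun x ↦ refineBy c P ∘ x) (E.indicator 1) :=
    energy_mono (comp_factorsThrough_of_factorsThrough (factorsThrough_refineBy c P))
  let A : (Fin k → Fin L) × Fin k → Finset V := fun j ↦ U j.1 j.2
  have hrefine : (fun x : Fin k → V ↦ refineBy c P ∘ x).FactorsThrough
      fun x ↦ refineBy (refineBy c P) A ∘ x :=
    comp_factorsThrough_of_factorsThrough (factorsThrough_refineBy _ A)
  have hsat : ∀ t ∈ irregularTuples δ E P, (· ∈ Fintype.piFinset (U t)).FactorsThrough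
      fun x ↦ refineBy (refineBy c P) A ∘ x :=
    fun t _ ↦ piFinset_factorsThrough_refineBy _ A (t, ·)
  refine ⟨A, (add_le_add_left hmono _).trans ?_⟩
  have hgain := energy_add_le_of_le_abs_expect_sub (F := E.indicator 1) (s := (δ * m) ^ k)
    hrefine hδ.le ?_ hsat ?_ ?_
  · simpa using hgain
  · intro t ht t' ht' htt'
    obtain ⟨i, hi⟩ := ne_iff.1 htt'
    exact Fintype.piFinset_disjoint_of_disjoint _ _ ((hP hi).mono (hUP t ht i) (hUP t' ht' i))
  · intro t ht
    rw [Fintype.card_piFinset, Nat.cast_prod]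
    simpa using prod_le_prod (s := univ) (fun i _ ↦ by positivity) fun i _ ↦ hUm t ht i
  · intro t ht
    have hsub : Fintype.piFinset (U t) ⊆ Fintype.piFinset (P ∘ t) :=
      Fintype.piFinset_subset _ _ (hUP t ht)
    rw [expect_sub_distrib, ← kDensity_eq_expect, expect_congr rfl fun x hx ↦
      fiberAvg_refineBy_eq_kDensity hc hP (hsub hx), expect_const (hne t ht)]
    exact hUδ t ht

end EnergyIncrement

section WeakRegularity

variable {V : Type*} [Fintype V] {k : ℕ} {E : Set (Fin k → V)} {δ : ℝ}

/-- `V` has a near partition into between `L₀` and `N` equal parts such that all but a proportion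
`δ` of the `k`-tuples of parts are weakly `δ`-regular for `E`. -/
def HasRegularPartition (δ : ℝ) (L₀ N : ℕ) (E : Set (Fin k → V)) : Prop :=
  ∃ (L m : ℕ) (P : Fin L → Finset V), L₀ ≤ L ∧ L ≤ N ∧ IsNearPartition δ P m ∧
    #(irregularTuples δ E P) ≤ δ * L ^ k

lemma HasRegularPartition.mono {L₀ N N' : ℕ} (h : HasRegularPartition δ L₀ N E) (hN : N ≤ N') :
    HasRegularPartition δ L₀ N' E :=
  let ⟨L, m, P, hL₀, hL, hP⟩ := h
  ⟨L, m, P, hL₀, hL.trans hN, hP⟩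

lemma IsNearPartition.card_le_two_mul {L m : ℕ} {P : Fin L → Finset V} (hP : IsNearPartition δ P m)
    (hδ' : δ ≤ 1 / 2) : (Fintype.card V : ℝ) ≤ 2 * (L * m) := by
  nlinarith [hP.le_mul, (Fintype.card V).cast_nonneg (α := ℝ)]

lemma IsNearPartition.exists_energy_add_le [Nonempty V] {K : Type*} {c : V → K} {L m : ℕ}
    {P : Fin L → Finset V} (hP : IsNearPartition δ P m) (hc : ∀ l, IsMonochromatic c (P l))
    (hδ : 0 < δ) (hδ' : δ ≤ 1 / 2) (hirr : δ * L ^ k < #(irregularTuples δ E P)) :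
    ∃ A : (Fin k → Fin L) × Fin k → Finset V,
      energy (fun x : Fin k → V ↦ c ∘ x) (E.indicator 1) + δ ^ 3 * (δ / 2) ^ k ≤
        energy (fun x : Fin k → V ↦ refineBy (refineBy c P) A ∘ x) (E.indicator 1) := by
  have hLm := hP.card_le_two_mul hδ'
  have hm : 0 < m := Nat.pos_of_ne_zero fun h ↦ by simp [h] at hLm
  obtain ⟨A, hA⟩ := exists_energy_add_le_of_irregularTuples (E := E) hc hP.card_eq hP.disjoint hm hδ
  refine ⟨A, (add_le_add_right ?_ _).trans hA⟩
  rw [le_div_iff₀ (by positivity)]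
  calc δ ^ 3 * (δ / 2) ^ k * Fintype.card V ^ k
      = δ ^ 3 * (δ / 2 * Fintype.card V) ^ k := by rw [mul_pow _ (Fintype.card V : ℝ), mul_assoc]
    _ ≤ δ ^ 3 * (L * (δ * m)) ^ k := by gcongr δ ^ 3 * ?_ ^ k; nlinarith
    _ = δ * L ^ k * ((δ * m) ^ k * δ ^ 2) := by ring
    _ ≤ #(irregularTuples δ E P) * ((δ * m) ^ k * δ ^ 2) := by gcongr

lemma exists_energy_le_comp {K : Type*} [Fintype K] {M : ℕ} (c : V → K) (hM : Fintype.card K ≤ M) :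
    ∃ c' : V → Fin M, energy (fun x : Fin k → V ↦ c ∘ x) (E.indicator 1) ≤
      energy (fun x : Fin k → V ↦ c' ∘ x) (E.indicator 1) := by
  obtain ⟨e⟩ := Embedding.nonempty_of_card_le (β := Fin M) (hM.trans_eq (Fintype.card_fin M).symm)
  exact ⟨e ∘ c, energy_mono (comp_factorsThrough_of_factorsThrough fun _ _ h ↦ e.injective h)⟩

lemma exists_hasRegularPartition_or_energy_add_le (k : ℕ) (hδ : 0 < δ) (hδ' : δ ≤ 1 / 2)
    (L₀ M : ℕ) :
    ∃ N M' : ℕ, ∀ (V : Type*) [Fintype V], N ≤ Fintype.card V → ∀ (E : Set (Fin k → V))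
      (c : V → Fin M), HasRegularPartition δ L₀ N E ∨ ∃ c' : V → Fin M',
        energy (fun x : Fin k → V ↦ c ∘ x) (E.indicator 1) + δ ^ 3 * (δ / 2) ^ k ≤
          energy (fun x : Fin k → V ↦ c' ∘ x) (E.indicator 1) := by
  obtain ⟨N, hN⟩ := exists_monochromatic_isNearPartition hδ hδ' L₀ M
  let colors (L : ℕ) : Type := (Fin M × Set (Fin L)) × Set ((Fin k → Fin L) × Fin k)
  refine ⟨N + 1, (range (N + 1)).sup fun L ↦ Fintype.card (colors L), fun V _ hV E c ↦ ?_⟩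
  have : Nonempty V := Fintype.card_pos_iff.1 (Nat.zero_lt_of_lt hV)
  obtain ⟨L, m, P, hL₀, hLN, hc, hP⟩ := hN V (Nat.le_of_succ_le hV) c
  rcases le_or_gt (#(irregularTuples δ E P) : ℝ) (δ * L ^ k) with hreg | hirr
  · exact .inl ⟨L, m, P, hL₀, hLN.trans N.le_succ, hP, hreg⟩
  · obtain ⟨A, hA⟩ := hP.exists_energy_add_le hc hδ hδ' hirr
    obtain ⟨c', hc'⟩ := exists_energy_le_comp (E := E) (refineBy (refineBy c P) A)
      (le_sup (f := fun L ↦ Fintype.card (colors L)) (mem_range.2 (Nat.lt_succ_of_le hLN)))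
    exact .inr ⟨c', hA.trans hc'⟩

lemma exists_hasRegularPartition_or_le_energy (k : ℕ) (hδ : 0 < δ) (hδ' : δ ≤ 1 / 2)
    (L₀ j : ℕ) :
    ∃ N M : ℕ, ∀ (V : Type*) [Fintype V], N ≤ Fintype.card V → ∀ E : Set (Fin k → V),
      HasRegularPartition δ L₀ N E ∨ ∃ c : V → Fin M,
        j * (δ ^ 3 * (δ / 2) ^ k) ≤ energy (fun x : Fin k → V ↦ c ∘ x) (E.indicator 1) := by
  induction j with
  | zero => exact ⟨0, 1, fun V _ _ E ↦ .inr ⟨0, by simpa using energy_nonneg⟩⟩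
  | succ j ih =>
    obtain ⟨N₁, M, h₁⟩ := ih
    obtain ⟨N₂, M', h₂⟩ := exists_hasRegularPartition_or_energy_add_le k hδ hδ' L₀ M
    refine ⟨max N₁ N₂, M', fun V _ hV E ↦ ?_⟩
    rcases h₁ V ((le_max_left _ _).trans hV) E with hreg | ⟨c, hc⟩
    · exact .inl (hreg.mono (le_max_left _ _))
    rcases h₂ V ((le_max_right _ _).trans hV) E c with hreg | ⟨c', hc'⟩
    · exact .inl (hreg.mono (le_max_right _ _))
    · refine .inr ⟨c', (le_trans ?_ hc')⟩
      push_cast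
      linarith

theorem exists_hasRegularPartition (k : ℕ) (hδ : 0 < δ) (hδ' : δ ≤ 1 / 2) (L₀ : ℕ) :
    ∃ N : ℕ, ∀ (V : Type*) [Fintype V], N ≤ Fintype.card V → ∀ E : Set (Fin k → V),
      HasRegularPartition δ L₀ N E := by
  obtain ⟨j, hj⟩ := exists_lt_nsmul (by positivity : 0 < δ ^ 3 * (δ / 2) ^ k) 1
  obtain ⟨N, M, h⟩ := exists_hasRegularPartition_or_le_energy k hδ hδ' L₀ j
  refine ⟨N, fun V _ hV E ↦ (h V hV E).resolve_right fun ⟨c, hc⟩ ↦ ?_⟩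
  have hone : energy (fun x : Fin k → V ↦ c ∘ x) (E.indicator 1) ≤ 1 :=
    energy_le_one fun x ↦ by by_cases hx : x ∈ E <;> simp [hx]
  rw [nsmul_eq_mul] at hj
  linarith

end WeakRegularity

section Tuples

variable {V : Type*} {k r : ℕ} {ε δ d : ℝ}

lemma kCount_congr {F F' : Set (Fin k → V)} {U : Fin k → Finset V}
    (h : ∀ x ∈ Fintype.piFinset U, x ∈ F ↔ x ∈ F') : kCount F U = kCount F' U :=
  congrArg card (filter_congr h)

lemma kCount_eq_kDensity_mul (F : Set (Fin k → V)) (U : Fin k → Finset V) :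
    (kCount F U : ℝ) = kDensity F U * ∏ i, (#(U i) : ℝ) := by
  rw [kDensity_eq_expect, ← Nat.cast_prod, ← Fintype.card_piFinset, mul_comm, card_mul_expect]
  simp [kCount, Set.indicator_apply]

lemma KReg.congr {F F' : Set (Fin k → V)} {P : Fin k → Finset V} (hF : KReg ε d F P)
    (h : ∀ x ∈ Fintype.piFinset P, x ∈ F ↔ x ∈ F') : KReg ε d F' P := by
  have hdens : ∀ U, (∀ i, U i ⊆ P i) → kDensity F U = kDensity F' U := fun U hU ↦ by
    rw [kDensity, kDensity, kCount_congr fun x hx ↦ h x (Fintype.piFinset_subset _ _ hU hx)]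
  refine ⟨hdens P (fun _ ↦ subset_rfl) ▸ hF.1, fun U hU hcard ↦ ?_⟩
  rw [← hdens U hU, ← hdens P fun _ ↦ subset_rfl]
  exact hF.2 U hU hcard

lemma KTupleReg.kReg_of_subset {F : Set (Fin k → V)} {P W : Fin k → Finset V}
    (h : KTupleReg δ F P) (hδ : δ ≤ 1 / 2) (hε : 2 * δ ≤ ε) (hWP : ∀ i, W i ⊆ P i)
    (hcard : ∀ i, (#(P i) : ℝ) ≤ 2 * #(W i)) (hd : d + δ ≤ kDensity F P) : KReg ε d F W := by
  have hW : |kDensity F W - kDensity F P| < δ :=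
    h W hWP fun i ↦ by nlinarith [hcard i, (#(P i)).cast_nonneg (α := ℝ)]
  refine ⟨by linarith [(abs_lt.1 hW).1], fun U hU hUW ↦ ?_⟩
  have hU : |kDensity F U - kDensity F P| < δ :=
    h U (fun i ↦ (hU i).trans (hWP i)) fun i ↦ by
      have hδ0 : 0 ≤ δ := (abs_nonneg _).trans hW.le
      nlinarith [hcard i, hUW i, (#(W i)).cast_nonneg (α := ℝ)]
  calc |kDensity F U - kDensity F W|
      ≤ |kDensity F U - kDensity F P| + |kDensity F P - kDensity F W| := abs_sub_le _ _ _
    _ < δ + δ := by rw [abs_sub_comm (kDensity F P)]; exact add_lt_add hU hW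
    _ ≤ ε := by linarith

/-- The `k`-tuples whose entries form an edge of `E`; this turns a hypergraph given by its set of
edges into the tuple encoding used by `kDensity` and `KReg`. -/
def orderedEdges (k : ℕ) (E : Set (Finset V)) : Set (Fin k → V) := {x | univ.image x ∈ E}

lemma kDensity_orderedEdges_comp_perm (E : Set (Finset V)) (U : Fin k → Finset V)
    (σ : Equiv.Perm (Fin k)) :
    kDensity (orderedEdges k E) (U ∘ σ) = kDensity (orderedEdges k E) U := by
  rw [kDensity_eq_expect, kDensity_eq_expect]
  refine expect_equiv (σ.symm.arrowCongr (.refl V)).symm (fun x ↦ ?_) fun x _ ↦ ?_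
  · simp only [Fintype.mem_piFinset, comp_apply]
    exact σ.forall_congr fun i ↦ by simp
  · have : univ.image (x ∘ σ.symm) = univ.image x := by
      rw [← image_image, image_univ_equiv]
    simp [Set.indicator_apply, orderedEdges, this, Equiv.arrowCongr]

lemma KReg.comp_perm {E : Set (Finset V)} {P : Fin k → Finset V}
    (h : KReg ε d (orderedEdges k E) P) (σ : Equiv.Perm (Fin k)) :
    KReg ε d (orderedEdges k E) (P ∘ σ) := by
  refine ⟨by simpa only [kDensity_orderedEdges_comp_perm] using h.1, fun U hU hcard ↦ ?_⟩
  have hU' := h.2 (U ∘ σ.symm) (fun i ↦ by simpa using hU (σ.symm i))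
    fun i ↦ by simpa using hcard (σ.symm i)
  simpa only [kDensity_orderedEdges_comp_perm] using hU'

/-- The link of `v` in its first coordinate: the `r`-tuples that `v` extends to a member of `F`. -/
def tupleLink (F : Set (Fin (r + 1) → V)) (v : V) : Set (Fin r → V) := {p | Fin.cons v p ∈ F}

lemma kDensity_cons (F : Set (Fin (r + 1) → V)) (A : Finset V) (U : Fin r → Finset V) :
    kDensity F (Fin.cons A U) = 𝔼 v ∈ A, kDensity (tupleLink F v) U := by
  simp only [kDensity_eq_expect]
  rw [← expect_product']
  refine expect_equiv (Fin.consEquiv fun _ ↦ V).symm (fun x ↦ ?_) fun x _ ↦ ?_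
  · simp [Fin.forall_fin_succ, Fin.tail_def]
  · simp [Set.indicator_apply, tupleLink, Fin.consEquiv]

lemma KTupleReg.card_filter_le_kDensity_tupleLink_le {F : Set (Fin (r + 1) → V)} {A : Finset V}
    {U : Fin r → Finset V} (h : KTupleReg δ F (Fin.cons A U)) (hδ : 0 ≤ δ) (hδ' : δ ≤ 1) :
    #{v ∈ A | kDensity F (Fin.cons A U) + δ ≤ kDensity (tupleLink F v) U} ≤ δ * #A := by
  set S := {v ∈ A | kDensity F (Fin.cons A U) + δ ≤ kDensity (tupleLink F v) U}
  by_contra! hS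
  have hSne : S.Nonempty := card_pos.1 (by exact_mod_cast (by positivity : 0 ≤ δ * #A).trans_lt hS)
  have hlow : kDensity F (Fin.cons A U) + δ ≤ kDensity F (Fin.cons S U) := by
    rw [kDensity_cons F S]
    exact le_expect hSne fun v hv ↦ (mem_filter.1 hv).2
  have hreg := h (Fin.cons S U) (Fin.forall_fin_succ.2 ⟨filter_subset _ _, fun _ ↦ subset_rfl⟩)
    (Fin.forall_fin_succ.2 ⟨hS.le, fun i ↦ mul_le_of_le_one_left (Nat.cast_nonneg _) hδ'⟩)
  linarith [(abs_lt.1 hreg).2]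

end Tuples

section Trimming

variable {V : Type*} {r L L' m : ℕ} {δ η : ℝ} {F : Set (Fin (r + 1) → V)} {P : Fin L → Finset V}

lemma card_filter_mul_lt_le {ι : Type*} {s : Finset ι} {f : ι → ℝ} {B : ℝ} (hf : ∀ i ∈ s, 0 ≤ f i)
    (hη : 0 < η) (hB : 0 < B) (hsum : ∑ i ∈ s, f i ≤ η ^ 2 * (#s * B)) :
    #{i ∈ s | η * B < f i} ≤ η * #s := by
  refine le_of_mul_le_mul_right ?_ (mul_pos hη hB)
  calc #{i ∈ s | η * B < f i} * (η * B)
      = ∑ i ∈ s with η * B < f i, η * B := by simp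
    _ ≤ ∑ i ∈ s with η * B < f i, f i := sum_le_sum fun i hi ↦ (mem_filter.1 hi).2.le
    _ ≤ ∑ i ∈ s, f i := sum_le_sum_of_subset_of_nonneg (filter_subset _ _) fun i hi _ ↦ hf i hi
    _ ≤ η * #s * (η * B) := hsum.trans_eq (by ring)

/-- The index tuples that form an irregular tuple of parts together with the part `h`. -/
noncomputable def irregularLinks (δ : ℝ) (F : Set (Fin (r + 1) → V)) (P : Fin L → Finset V)
    (h : Fin L) : Finset (Fin r → Fin L) :=
  {q | Fin.cons h q ∈ irregularTuples δ F P}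

/-- The index tuples forming a regular tuple of parts together with the part `h`, but in which the
link of the vertex `v` of that part is denser than the tuple by at least `δ`. -/
noncomputable def atypicalLinks (δ : ℝ) (F : Set (Fin (r + 1) → V)) (P : Fin L → Finset V)
    (h : Fin L) (v : V) : Finset (Fin r → Fin L) :=
  {q | Fin.cons h q ∉ irregularTuples δ F P ∧
    kDensity F (P ∘ Fin.cons h q) + δ ≤ kDensity (tupleLink F v) (P ∘ q)}

lemma sum_card_irregularLinks :
    ∑ h, #(irregularLinks δ F P h) = #(irregularTuples δ F P) := by
  simp only [irregularLinks, card_filter]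
  rw [← Fintype.sum_prod_type']
  exact ((Fin.consEquiv fun _ ↦ Fin L).sum_comp
    fun t ↦ if t ∈ irregularTuples δ F P then 1 else 0).trans (by simp)

lemma sum_card_atypicalLinks_le (hδ : 0 ≤ δ) (hδ' : δ ≤ 1) (h : Fin L) :
    ∑ v ∈ P h, (#(atypicalLinks δ F P h v) : ℝ) ≤ δ * (#(P h) * L ^ r) := by
  have hq : ∀ q : Fin r → Fin L, (#{v ∈ P h | q ∈ atypicalLinks δ F P h v} : ℝ) ≤ δ * #(P h) := by
    intro q
    by_cases hreg : Fin.cons h q ∈ irregularTuples δ F P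
    · simpa [atypicalLinks, hreg] using mul_nonneg hδ (Nat.cast_nonneg _)
    · have : KTupleReg δ F (Fin.cons (P h) (P ∘ q)) := by
        simpa [irregularTuples, Fin.comp_cons] using hreg
      simpa [atypicalLinks, hreg, Fin.comp_cons] using
        this.card_filter_le_kDensity_tupleLink_le hδ hδ'
  calc ∑ v ∈ P h, (#(atypicalLinks δ F P h v) : ℝ)
      = ∑ q, (#{v ∈ P h | q ∈ atypicalLinks δ F P h v} : ℝ) := by
        exact_mod_cast by
          simpa [bipartiteAbove, bipartiteBelow] using
            sum_card_bipartiteAbove_eq_sum_card_bipartiteBelow (s := P h) (t := univ)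
              fun v q ↦ q ∈ atypicalLinks δ F P h v
    _ ≤ ∑ _q : Fin r → Fin L, δ * #(P h) := sum_le_sum fun q _ ↦ hq q
    _ = δ * (#(P h) * L ^ r) := by simp; ring

/-- `W` consists of large subsets of parts of `P`, the cluster `W l` lying in `P (g l)`, such that
few index tuples are irregular or atypical for a cluster and a vertex in it. -/
structure IsTypicalTrimming (η : ℝ) (F : Set (Fin (r + 1) → V)) (P : Fin L → Finset V)
    (g : Fin L' → Fin L) (W : Fin L' → Finset V) : Prop where
  subset : ∀ l, W l ⊆ P (g l)
  card_le : ∀ l, (#(P (g l)) : ℝ) ≤ 2 * #(W l)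
  card_irregularLinks_le : ∀ l, #(irregularLinks (η ^ 2) F P (g l)) ≤ η * L ^ r
  card_atypicalLinks_le : ∀ l, ∀ v ∈ W l, #(atypicalLinks (η ^ 2) F P (g l) v) ≤ η * L ^ r

lemma exists_typical_parts (hη : 0 < η)
    (hirr : #(irregularTuples (η ^ 2) F P) ≤ η ^ 2 * L ^ (r + 1)) :
    ∃ (L' : ℕ) (g : Fin L' ↪ Fin L), (1 - η) * L ≤ L' ∧
      ∀ l, #(irregularLinks (η ^ 2) F P (g l)) ≤ η * L ^ r := by
  let H : Finset (Fin L) := {h | #(irregularLinks (η ^ 2) F P h) ≤ η * (L : ℝ) ^ r}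
  refine ⟨#H, H.equivFin.symm.toEmbedding.trans (.subtype _), ?_, fun l ↦
    (mem_filter.1 (H.equivFin.symm l).2).2⟩
  obtain rfl | hL := L.eq_zero_or_pos
  · simp
  have hbad : (#{h : Fin L | η * (L : ℝ) ^ r < #(irregularLinks (η ^ 2) F P h)} : ℝ) ≤ η * L := by
    refine (card_filter_mul_lt_le (fun _ _ ↦ Nat.cast_nonneg _) hη (by positivity) ?_).trans_eq
      (by simp)
    rw [← Nat.cast_sum, sum_card_irregularLinks]
    exact hirr.trans_eq (by rw [card_univ, Fintype.card_fin, ← pow_succ'])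
  have hsum : #H + #{h : Fin L | η * (L : ℝ) ^ r < #(irregularLinks (η ^ 2) F P h)} = L := by
    simpa [H] using card_filter_add_card_filter_not (s := (univ : Finset (Fin L)))
      fun h ↦ #(irregularLinks (η ^ 2) F P h) ≤ η * (L : ℝ) ^ r
  have : (#H : ℝ) + #{h : Fin L | η * (L : ℝ) ^ r < #(irregularLinks (η ^ 2) F P h)} = L := by
    exact_mod_cast hsum
  linarith

lemma exists_typical_subset (hη : 0 < η) (hη' : η ≤ 1) (h : Fin L) :
    ∃ W ⊆ P h, #W = #(P h) - ⌊η * #(P h)⌋₊ ∧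
      ∀ v ∈ W, #(atypicalLinks (η ^ 2) F P h v) ≤ η * L ^ r := by
  have hL : 0 < L := h.pos
  let A : Finset V := {v ∈ P h | #(atypicalLinks (η ^ 2) F P h v) ≤ η * (L : ℝ) ^ r}
  have hbad : #{v ∈ P h | η * (L : ℝ) ^ r < #(atypicalLinks (η ^ 2) F P h v)} ≤ ⌊η * #(P h)⌋₊ :=
    Nat.le_floor <| card_filter_mul_lt_le (fun _ _ ↦ Nat.cast_nonneg _) hη (by positivity)
      (sum_card_atypicalLinks_le (by positivity) (pow_le_one₀ hη.le hη') h)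
  have hsum : #A + #{v ∈ P h | η * (L : ℝ) ^ r < #(atypicalLinks (η ^ 2) F P h v)} = #(P h) := by
    simpa [A] using card_filter_add_card_filter_not (s := P h)
      fun v ↦ #(atypicalLinks (η ^ 2) F P h v) ≤ η * (L : ℝ) ^ r
  obtain ⟨W, hWA, hW⟩ := exists_subset_card_eq (s := A) (n := #(P h) - ⌊η * #(P h)⌋₊) (by omega)
  exact ⟨W, hWA.trans (filter_subset _ _), hW, fun v hv ↦ (mem_filter.1 (hWA hv)).2⟩

lemma IsNearPartition.exists_isTypicalTrimming [Fintype V] (hP : IsNearPartition (η ^ 2) P m)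
    (hη : 0 < η) (hη' : η ≤ 1 / 2) (hirr : #(irregularTuples (η ^ 2) F P) ≤ η ^ 2 * L ^ (r + 1)) :
    ∃ (L' m' : ℕ) (g : Fin L' → Fin L) (W : Fin L' → Finset V), (1 - η) * L ≤ L' ∧ L' ≤ L ∧
      IsNearPartition (3 * η) W m' ∧ IsTypicalTrimming η F P g W := by
  obtain ⟨L', g, hL', hg⟩ := exists_typical_parts hη hirr
  choose W hWP hcard hW using fun l ↦ exists_typical_subset (F := F) (P := P) hη (by linarith) (g l)
  simp only [hP.card_eq] at hcard
  have hm : (1 - η) * m ≤ ((m - ⌊η * m⌋₊ : ℕ) : ℝ) := by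
    have := Nat.floor_le (by positivity : 0 ≤ η * m)
    rw [Nat.cast_sub (Nat.floor_le_of_le (by nlinarith [m.cast_nonneg (α := ℝ)]))]
    linarith
  refine ⟨L', m - ⌊η * m⌋₊, g, W, hL', by simpa using Fintype.card_le_of_embedding g,
    ⟨hcard, fun i j hij ↦ (hP.disjoint (g.injective.ne hij)).mono (hWP i) (hWP j), ?_⟩,
    ⟨hWP, fun l ↦ ?_, hg, hW⟩⟩
  · have hη0 : 0 ≤ 1 - η := by linarith
    calc (1 - 3 * η) * Fintype.card V
        ≤ (1 - η) * (1 - η) * ((1 - η ^ 2) * Fintype.card V) := by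
          rw [← mul_assoc]
          gcongr
          nlinarith [pow_pos hη 3]
      _ ≤ (1 - η) * (1 - η) * (L * m) := by gcongr _ * ?_; exact hP.le_mul
      _ = (1 - η) * L * ((1 - η) * m) := by ring
      _ ≤ L' * ((m - ⌊η * m⌋₊ : ℕ) : ℝ) := by gcongr
  · rw [hcard, hP.card_eq]
    nlinarith [m.cast_nonneg (α := ℝ)]

end Trimming

section RegularSubgraph

variable {V : Type*} {k r L : ℕ} {ε d : ℝ} {E : Set (Finset V)} {W : Fin L → Finset V}

/-- The spanning subhypergraph of `E` keeping the edges that leave the clusters `W l`, and those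
meeting every cluster of some `(ε, d)`-regular `k`-tuple of distinct clusters. -/
def regularSubgraph (ε d : ℝ) (k : ℕ) (E : Set (Finset V)) (W : Fin L → Finset V) :
    Set (Finset V) :=
  {e ∈ E | (∃ x ∈ e, ∀ l, x ∉ W l) ∨ ∃ t : Fin k → Fin L, Injective t ∧
    KReg ε d (orderedEdges k E) (W ∘ t) ∧ ∀ i, (e ∩ W (t i)).Nonempty}

lemma regularSubgraph_subset : regularSubgraph ε d k E W ⊆ E := fun _ he ↦ he.1

lemma exists_image_eq_of_inter_nonempty (hW : Pairwise (Disjoint on W)) {t : Fin k → Fin L}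
    (ht : Injective t) {e : Finset V} (he : #e = k) (hne : ∀ i, (e ∩ W (t i)).Nonempty) :
    ∃ x : Fin k → V, univ.image x = e ∧ ∀ i, x i ∈ W (t i) := by
  choose x hx using hne
  simp only [mem_inter] at hx
  have hinj : Injective x := fun i j hij ↦ ht <| by
    by_contra hne
    exact disjoint_left.1 (hW hne) (hx i).2 (hij ▸ (hx j).2)
  exact ⟨x, eq_of_subset_of_card_le (image_subset_iff.2 fun i _ ↦ (hx i).1)
    (by simp [card_image_of_injective _ hinj, he]), fun i ↦ (hx i).2⟩

lemma exists_forall_notMem_of_mem_regularSubgraph (hW : Pairwise (Disjoint on W)) {e : Finset V}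
    (he : e ∈ regularSubgraph ε d k E W) (hcard : #e = k) {l : Fin L} (hl : 1 < #(e ∩ W l)) :
    ∃ x ∈ e, ∀ l, x ∉ W l := by
  refine he.2.resolve_right ?_
  rintro ⟨t, ht, -, hne⟩
  obtain ⟨x, rfl, hx⟩ := exists_image_eq_of_inter_nonempty hW ht hcard hne
  have htl : ∀ i, x i ∈ W l → t i = l := fun i hi ↦ by
    by_contra hne
    exact disjoint_left.1 (hW hne) (hx i) hi
  obtain ⟨a, ha, b, hb, hab⟩ := one_lt_card.1 hl
  simp only [mem_inter, mem_image, mem_univ, true_and] at ha hb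
  obtain ⟨⟨i, rfl⟩, hi⟩ := ha
  obtain ⟨⟨j, rfl⟩, hj⟩ := hb
  exact hab (congrArg x (ht ((htl i hi).trans (htl j hj).symm)))

lemma exists_perm_of_inter_nonempty (hW : Pairwise (Disjoint on W)) {s t : Fin k → Fin L}
    (ht : Injective t) {y : Fin k → V} (hy : ∀ i, y i ∈ W (s i))
    (hne : ∀ i, (univ.image y ∩ W (t i)).Nonempty) : ∃ σ : Equiv.Perm (Fin k), s = t ∘ σ := by
  have hst : ∀ i, ∃ j, s j = t i := fun i ↦ by
    obtain ⟨x, hx⟩ := hne i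
    simp only [mem_inter, mem_image, mem_univ, true_and] at hx
    obtain ⟨⟨j, rfl⟩, hj⟩ := hx
    refine ⟨j, by_contra fun hne ↦ disjoint_left.1 (hW hne) (hy j) hj⟩
  choose j hj using hst
  have hinj : Injective j := fun a b hab ↦ ht (by rw [← hj, ← hj, hab])
  let σ := Equiv.ofBijective j (Finite.injective_iff_bijective.1 hinj)
  exact ⟨σ.symm, funext fun i ↦ by
    rw [comp_apply, ← hj]
    exact congrArg s (σ.apply_symm_apply i).symm⟩

lemma kCount_regularSubgraph_eq_zero_or_kReg (hW : Pairwise (Disjoint on W)) {s : Fin k → Fin L}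
    (hs : Injective s) :
    kCount (orderedEdges k (regularSubgraph ε d k E W)) (W ∘ s) = 0 ∨
      KReg ε d (orderedEdges k (regularSubgraph ε d k E W)) (W ∘ s) := by
  refine or_iff_not_imp_left.2 fun hcount ↦ ?_
  obtain ⟨y, hy⟩ := card_ne_zero.1 hcount
  obtain ⟨hyW, hyE⟩ := mem_filter.1 hy
  replace hyW : ∀ i, y i ∈ W (s i) := Fintype.mem_piFinset.1 hyW
  obtain ⟨t, ht, hreg, hne⟩ := hyE.2.resolve_left <| by
    rintro ⟨x, hx, hxW⟩
    obtain ⟨i, -, rfl⟩ := mem_image.1 hx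
    exact hxW _ (hyW i)
  obtain ⟨σ, rfl⟩ := exists_perm_of_inter_nonempty hW ht hyW hne
  have hregs : KReg ε d (orderedEdges k E) (W ∘ t ∘ σ) := hreg.comp_perm σ
  refine hregs.congr fun z hz ↦ ⟨fun hzE ↦ ⟨hzE, .inr ⟨_, hs, hregs, fun i ↦ ?_⟩⟩, fun h ↦ h.1⟩
  refine ⟨z i, ?_⟩
  simpa using Fintype.mem_piFinset.1 hz i

lemma mem_tupleLink_sdiff_regularSubgraph {l : Fin L} {v : V} (hv : v ∈ W l) {p : Fin r → V}
    (hp : p ∈ tupleLink (orderedEdges (r + 1) (E \ regularSubgraph ε d (r + 1) E W)) v) :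
    ∃ s : Fin r → Fin L, (∀ i, p i ∈ W (s i)) ∧ (Injective (Fin.cons l s : Fin (r + 1) → Fin L) →
      ¬KReg ε d (orderedEdges (r + 1) E) (W ∘ Fin.cons l s)) := by
  obtain ⟨hpE, hlost⟩ := hp
  have hcover : ∀ i, ∃ l, p i ∈ W l := fun i ↦ by
    by_contra! hi
    exact hlost ⟨hpE, .inl ⟨p i, mem_image.2 ⟨i.succ, by simp⟩, hi⟩⟩
  choose s hs using hcover
  refine ⟨s, hs, fun hinj hreg ↦ hlost ⟨hpE, .inr ⟨_, hinj, hreg, fun i ↦ ?_⟩⟩⟩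
  refine ⟨(Fin.cons v p : Fin (r + 1) → V) i, mem_inter.2 ⟨mem_image_of_mem _ (mem_univ _), ?_⟩⟩
  cases i using Fin.cases with
  | zero => simpa using hv
  | succ i => simpa using hs i

variable [Fintype V]

lemma hDeg_le_hDeg_add_card_tupleLink (hE : ∀ e ∈ E, #e = r + 1) (E' : Set (Finset V)) (v : V) :
    hDeg E v ≤ hDeg E' v + #{p | p ∈ tupleLink (orderedEdges (r + 1) (E \ E')) v} := by
  refine (card_le_card (fun e he ↦ ?_)).trans ((card_union_le _ _).trans (Nat.add_le_add_left
    (card_image_le (f := fun p : Fin r → V ↦ univ.image (Fin.cons v p : Fin (r + 1) → V))) _))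
  obtain ⟨heE, hve⟩ := mem_filter_univ _ |>.1 he
  by_cases heE' : e ∈ E'
  · exact mem_union_left _ (by simpa using ⟨heE', hve⟩)
  have hcard : #(e.erase v) = r := by rw [card_erase_of_mem hve, hE e heE, Nat.add_sub_cancel]
  let p : Fin r → V := fun i ↦ (e.erase v).equivFinOfCardEq hcard |>.symm i
  have hp : univ.image (Fin.cons v p : Fin (r + 1) → V) = e := by
    have himage : univ.image p = e.erase v := by
      rw [← attach_image_val (s := e.erase v), ← univ_eq_attach,
        ← image_univ_equiv ((e.erase v).equivFinOfCardEq hcard).symm, image_image]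
      rfl
    rw [Fin.univ_succ, cons_eq_insert, image_insert, map_eq_image, image_image]
    simpa [comp_def, himage] using insert_erase hve
  refine mem_union_right _ (mem_image.2 ⟨p, ?_, hp⟩)
  simpa [tupleLink, orderedEdges, hp] using ⟨heE, heE'⟩

lemma hDeg_regularSubgraph_of_forall_notMem {v : V} (hv : ∀ l, v ∉ W l) :
    hDeg (regularSubgraph ε d k E W) v = hDeg E v := by
  refine congrArg card (filter_congr fun e _ ↦ and_congr_left fun hve ↦ ?_)
  exact ⟨fun he ↦ he.1, fun he ↦ ⟨he, .inl ⟨v, hve, hv⟩⟩⟩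

end RegularSubgraph

section DegreeLoss

variable {V : Type*} {k r L L' m : ℕ} {ε η d : ℝ}

lemma kDensity_le_one (F : Set (Fin k → V)) (U : Fin k → Finset V) : kDensity F U ≤ 1 :=
  div_le_one_of_le₀ (by exact_mod_cast (card_filter_le _ _).trans_eq (Fintype.card_piFinset U))
    (by positivity)

lemma card_le_of_forall_exists_mem_piFinset {P : Fin L → Finset V} (hcard : ∀ l, #(P l) = m)
    {X : Finset (Fin k → V)} {F : Set (Fin k → V)} {B : Finset (Fin k → Fin L)} {c : ℝ}
    (hc : 0 ≤ c) (hX : ∀ p ∈ X, p ∈ F ∧ ∃ q, p ∈ Fintype.piFinset (P ∘ q) ∧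
      (q ∉ B → kDensity F (P ∘ q) ≤ c)) :
    #X ≤ (#B + c * L ^ k) * m ^ k := by
  let Q : Finset (Fin k → Fin L) := {q | q ∉ B → kDensity F (P ∘ q) ≤ c}
  have hsub : X ⊆ Q.biUnion fun q ↦ {p ∈ Fintype.piFinset (P ∘ q) | p ∈ F} := fun p hp ↦ by
    obtain ⟨hpF, q, hpq, hq⟩ := hX p hp
    exact mem_biUnion.2 ⟨q, by simpa [Q] using hq, mem_filter.2 ⟨hpq, hpF⟩⟩
  have hbound : ∀ q ∈ Q, (kCount F (P ∘ q) : ℝ) ≤ ((if q ∈ B then 1 else 0) + c) * m ^ k := by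
    intro q hq
    rw [kCount_eq_kDensity_mul]
    simp only [comp_apply, hcard, prod_const, card_univ, Fintype.card_fin]
    gcongr
    split_ifs with hqB
    · linarith [kDensity_le_one F (P ∘ q)]
    · simpa using (mem_filter_univ _).1 hq hqB
  calc (#X : ℝ) ≤ ∑ q ∈ Q, (kCount F (P ∘ q) : ℝ) := by
        exact_mod_cast (card_le_card hsub).trans card_biUnion_le
    _ ≤ ∑ q ∈ Q, ((if q ∈ B then 1 else 0) + c) * m ^ k := sum_le_sum hbound
    _ ≤ ∑ q, ((if q ∈ B then 1 else 0) + c) * m ^ k :=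
        sum_le_univ_sum_of_nonneg fun q ↦ by split_ifs <;> positivity
    _ = (#B + c * L ^ k) * m ^ k := by
        rw [← sum_mul, sum_add_distrib]
        simp [mul_comm c]

lemma sub_pow_le_card_injective_cons (r : ℕ) (h : Fin L) :
    (L - r) ^ r ≤ #{q : Fin r → Fin L | Injective (Fin.cons h q : Fin (r + 1) → Fin L)} := by
  have hcard : Fintype.card {x // x ≠ h} = L - 1 := by simp
  calc (L - r) ^ r = (L - 1 + 1 - r) ^ r := by rw [Nat.sub_add_cancel h.pos]
    _ ≤ (L - 1).descFactorial r := Nat.pow_sub_le_descFactorial _ _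
    _ = #(univ : Finset (Fin r ↪ {x // x ≠ h})) := by
        rw [card_univ, Fintype.card_embedding_eq, hcard, Fintype.card_fin]
    _ ≤ _ := card_le_card_of_injOn (fun f i ↦ (f i : Fin L)) ?_ ?_
  · refine fun f _ ↦ (mem_filter_univ _).2 <| Fin.cons_injective_iff.2
      ⟨?_, Subtype.val_injective.comp f.injective⟩
    rintro ⟨i, hi⟩
    exact (f i).2 hi
  · exact fun f _ f' _ hff' ↦ DFunLike.ext _ _ fun i ↦ Subtype.ext (congrFun hff' i)

lemma mul_pow_le_mul_sub_pow_add (L r : ℕ) : L * L ^ r ≤ L * (L - r) ^ r + r ^ 2 * L ^ r := by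
  obtain hrL | hrL := lt_or_ge L r
  · have : L ≤ r ^ 2 := hrL.le.trans (Nat.le_self_pow two_ne_zero r)
    exact (Nat.mul_le_mul_right _ this).trans (Nat.le_add_left _ _)
  obtain rfl | hL := L.eq_zero_or_pos
  · simp
  have hbernoulli : 1 + r * -(r / L : ℝ) ≤ (1 + -(r / L : ℝ)) ^ r := by
    have : (r / L : ℝ) ≤ 1 := div_le_one_of_le₀ (by exact_mod_cast hrL) (by positivity)
    exact one_add_mul_le_pow (by linarith) r
  suffices (L * L ^ r : ℝ) ≤ L * ((L - r : ℕ) : ℝ) ^ r + r ^ 2 * L ^ r by exact_mod_cast this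
  calc (L * L ^ r : ℝ) = L * L ^ r * (1 + r * -(r / L)) + r ^ 2 * L ^ r := by field_simp; ring
    _ ≤ L * L ^ r * (1 + -(r / L)) ^ r + r ^ 2 * L ^ r := by gcongr
    _ = L * (L * (1 + -(r / L))) ^ r + r ^ 2 * L ^ r := by rw [mul_pow, mul_assoc]
    _ = L * ((L - r : ℕ) : ℝ) ^ r + r ^ 2 * L ^ r := by
      rw [Nat.cast_sub hrL]
      field_simp
      ring

lemma mul_card_not_injective_cons_le (r : ℕ) (h : Fin L) :
    L * #{q : Fin r → Fin L | ¬Injective (Fin.cons h q : Fin (r + 1) → Fin L)} ≤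
      r ^ 2 * L ^ r := by
  have hsum := card_filter_add_card_filter_not (s := (univ : Finset (Fin r → Fin L)))
    fun q ↦ Injective (Fin.cons h q : Fin (r + 1) → Fin L)
  rw [card_univ, Fintype.card_fun, Fintype.card_fin, Fintype.card_fin] at hsum
  have hpow := mul_pow_le_mul_sub_pow_add L r
  have hinj := Nat.mul_le_mul_left L (sub_pow_le_card_injective_cons r h)
  rw [← hsum, mul_add, hsum] at hpow
  lia

lemma IsTypicalTrimming.kDensity_tupleLink_le {F : Set (Fin (r + 1) → V)} {P : Fin L → Finset V}
    {g : Fin L' → Fin L} {W : Fin L' → Finset V} (hT : IsTypicalTrimming η F P g W)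
    (hη : η ^ 2 ≤ 1 / 2) (hε : 2 * η ^ 2 ≤ ε) {l : Fin L'} {v : V} {s : Fin r → Fin L'}
    (hs : ¬KReg ε d F (W ∘ Fin.cons l s)) (hirr : g ∘ s ∉ irregularLinks (η ^ 2) F P (g l))
    (hatyp : g ∘ s ∉ atypicalLinks (η ^ 2) F P (g l) v) :
    kDensity (tupleLink F v) (P ∘ g ∘ s) ≤ d + 2 * η ^ 2 := by
  have hreg : KTupleReg (η ^ 2) F (P ∘ Fin.cons (g l) (g ∘ s)) := by
    simpa [irregularLinks, irregularTuples] using hirr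
  have hdens : kDensity F (P ∘ Fin.cons (g l) (g ∘ s)) < d + η ^ 2 := by
    by_contra! hd
    rw [← Fin.comp_cons] at hreg hd
    exact hs (hreg.kReg_of_subset hη hε (fun i ↦ hT.subset _) (fun i ↦ hT.card_le _) hd)
  have htyp : kDensity (tupleLink F v) (P ∘ g ∘ s) <
      kDensity F (P ∘ Fin.cons (g l) (g ∘ s)) + η ^ 2 := by
    simpa [atypicalLinks, irregularTuples, hreg] using hatyp
  linarith

lemma IsTypicalTrimming.card_le_of_not_kReg {F : Set (Fin (r + 1) → V)} {P : Fin L → Finset V}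
    {g : Fin L' → Fin L} {W : Fin L' → Finset V} (hT : IsTypicalTrimming η F P g W)
    (hcard : ∀ l, #(P l) = m) (hL : r ^ 2 ≤ η * L) (hη : η ^ 2 ≤ 1 / 2) (hε : 2 * η ^ 2 ≤ ε)
    (hd : 0 ≤ d) {l : Fin L'} {v : V} (hv : v ∈ W l) {X : Finset (Fin r → V)}
    (hX : ∀ p ∈ X, p ∈ tupleLink F v ∧ ∃ s : Fin r → Fin L', (∀ i, p i ∈ W (s i)) ∧
      (Injective (Fin.cons l s : Fin (r + 1) → Fin L') → ¬KReg ε d F (W ∘ Fin.cons l s))) :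
    #X ≤ (d + 2 * η ^ 2 + 3 * η) * (L * m) ^ r := by
  let N : Finset (Fin r → Fin L) := {q | ¬Injective (Fin.cons (g l) q : Fin (r + 1) → Fin L)}
  let B := irregularLinks (η ^ 2) F P (g l) ∪ atypicalLinks (η ^ 2) F P (g l) v ∪ N
  have hL0 : (0 : ℝ) < L := Nat.cast_pos.2 (g l).pos
  have hN : (#N : ℝ) ≤ η * L ^ r := by
    refine le_of_mul_le_mul_right ?_ hL0
    calc (#N : ℝ) * L ≤ r ^ 2 * L ^ r := by
          rw [mul_comm]
          exact_mod_cast mul_card_not_injective_cons_le r (g l)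
      _ ≤ η * L * L ^ r := by gcongr
      _ = η * L ^ r * L := by ring
  have hB : (#B : ℝ) ≤ 3 * η * L ^ r := by
    have : (#B : ℝ) ≤ #(irregularLinks (η ^ 2) F P (g l)) +
        #(atypicalLinks (η ^ 2) F P (g l) v) + #N := by
      exact_mod_cast (card_union_le _ _).trans (Nat.add_le_add_right (card_union_le _ _) _)
    linarith [hT.card_irregularLinks_le l, hT.card_atypicalLinks_le l v hv]
  have hsparse : ∀ p ∈ X, p ∈ tupleLink F v ∧ ∃ q, p ∈ Fintype.piFinset (P ∘ q) ∧
      (q ∉ B → kDensity (tupleLink F v) (P ∘ q) ≤ d + 2 * η ^ 2) := fun p hp ↦ by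
    obtain ⟨hpF, s, hps, hs⟩ := hX p hp
    refine ⟨hpF, g ∘ s, Fintype.mem_piFinset.2 fun i ↦ hT.subset _ (hps i), fun hq ↦ ?_⟩
    simp only [B, mem_union, not_or] at hq
    have hinj : Injective (g ∘ (Fin.cons l s : Fin (r + 1) → Fin L')) := by
      simpa [N, Fin.comp_cons] using hq.2
    exact hT.kDensity_tupleLink_le hη hε (hs hinj.of_comp) hq.1.1 hq.1.2
  calc (#X : ℝ) ≤ (#B + (d + 2 * η ^ 2) * L ^ r) * m ^ r :=
        card_le_of_forall_exists_mem_piFinset hcard (by positivity) hsparse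
    _ ≤ (3 * η * L ^ r + (d + 2 * η ^ 2) * L ^ r) * m ^ r := by gcongr
    _ = (d + 2 * η ^ 2 + 3 * η) * (L * m) ^ r := by rw [mul_pow]; ring

end DegreeLoss

section RegularityLemma

variable {V : Type*} [Fintype V] {r L L' m : ℕ} {ε η d : ℝ} {E : Set (Finset V)}

lemma IsTypicalTrimming.hDeg_le {P : Fin L → Finset V} {g : Fin L' → Fin L}
    {W : Fin L' → Finset V} (hT : IsTypicalTrimming η (orderedEdges (r + 1) E) P g W)
    (hP : IsNearPartition (η ^ 2) P m) (hL : r ^ 2 ≤ η * L) (hη : 0 ≤ η) (hη' : η ^ 2 ≤ 1 / 2)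
    (hε : 2 * η ^ 2 ≤ ε) (hd : 0 ≤ d) (hE : ∀ e ∈ E, #e = r + 1) (v : V) :
    (hDeg E v : ℝ) ≤ hDeg (regularSubgraph ε d (r + 1) E W) v +
      (d + 2 * η ^ 2 + 3 * η) * Fintype.card V ^ r := by
  obtain hv | ⟨l, hv⟩ := (forall_or_exists_not fun l ↦ v ∉ W l).imp_right fun h ↦ by simpa using h
  · rw [hDeg_regularSubgraph_of_forall_notMem hv]
    exact le_add_of_nonneg_right (by positivity)
  calc (hDeg E v : ℝ)
      ≤ hDeg (regularSubgraph ε d (r + 1) E W) v + #{p | p ∈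
          tupleLink (orderedEdges (r + 1) (E \ regularSubgraph ε d (r + 1) E W)) v} := by
        exact_mod_cast hDeg_le_hDeg_add_card_tupleLink hE _ v
    _ ≤ hDeg (regularSubgraph ε d (r + 1) E W) v + (d + 2 * η ^ 2 + 3 * η) * (L * m) ^ r := by
        gcongr
        refine hT.card_le_of_not_kReg hP.card_eq hL hη' hε hd hv fun p hp ↦ ?_
        rw [mem_filter_univ] at hp
        exact ⟨hp.1, mem_tupleLink_sdiff_regularSubgraph hv hp⟩
    _ ≤ _ := by gcongr; exact hP.mul_le

theorem exists_isNearPartition_hDeg_regularSubgraph {r : ℕ} (L₀ : ℕ) {ε : ℝ} (hε : 0 < ε) :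
    ∃ N : ℕ, ∀ (V : Type*) [Fintype V], N ≤ Fintype.card V → ∀ E : Set (Finset V),
      (∀ e ∈ E, #e = r + 1) → ∀ d : ℝ, 0 ≤ d → ∃ (L m : ℕ) (W : Fin L → Finset V),
        L₀ ≤ L ∧ L ≤ N ∧ IsNearPartition ε W m ∧ ∀ v, (hDeg E v : ℝ) -
          (d + ε) * Fintype.card V ^ r < hDeg (regularSubgraph ε d (r + 1) E W) v := by
  obtain ⟨η, hη, hηε, hη1⟩ : ∃ η > 0, 8 * η ≤ ε ∧ 8 * η ≤ 1 :=
    ⟨min ε 1 / 8, by positivity, by linarith [min_le_left ε 1], by linarith [min_le_right ε 1]⟩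
  have hηsq : 8 * η ^ 2 ≤ η := by nlinarith
  obtain ⟨N, hN⟩ := exists_hasRegularPartition (r + 1) (by positivity : 0 < η ^ 2) (by linarith)
    (2 * L₀ + ⌈(r ^ 2 / η : ℝ)⌉₊)
  refine ⟨N, fun V _ hV E hE d hd ↦ ?_⟩
  obtain ⟨L, m, P, hL₀, hLN, hP, hirr⟩ := hN V hV (orderedEdges (r + 1) E)
  obtain ⟨L', m', g, W, hL', hL'L, hW, hT⟩ := hP.exists_isTypicalTrimming hη (by linarith) hirr
  have hL₀R : 2 * L₀ + r ^ 2 / η ≤ (L : ℝ) := by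
    refine (add_le_add_right (Nat.le_ceil (r ^ 2 / η : ℝ)) _).trans ?_
    exact_mod_cast hL₀
  have hrL : (r ^ 2 : ℝ) ≤ η * L := by
    rw [mul_comm, ← div_le_iff₀ hη]
    linarith [(Nat.cast_nonneg L₀ : (0 : ℝ) ≤ L₀)]
  refine ⟨L', m', W, ?_, hL'L.trans hLN, ⟨hW.card_eq, hW.disjoint, ?_⟩, fun v ↦ ?_⟩
  · have : (L₀ : ℝ) ≤ L' := by
      nlinarith [(by positivity : (0 : ℝ) ≤ r ^ 2 / η), L.cast_nonneg (α := ℝ)]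
    exact_mod_cast this
  · refine le_trans ?_ hW.le_mul
    gcongr
    linarith
  · have hdeg := hT.hDeg_le hP hrL hη.le (by linarith) (by linarith : 2 * η ^ 2 ≤ ε) hd hE v
    have hV0 : (0 : ℝ) < Fintype.card V ^ r := by
      have : 0 < Fintype.card V := Fintype.card_pos_iff.2 ⟨v⟩
      positivity
    nlinarith

/-- The clusters `W` renumbered as `1, …, L`, preceded by the exceptional cluster `0` of the
vertices in none of them; the values at indices above `L` are empty. -/
noncomputable def numberedClusters (W : Fin L → Finset V) (i : ℕ) : Finset V :=
  {x | i = 0 ∧ (∀ l, x ∉ W l) ∨ ∃ l : Fin L, i = l + 1 ∧ x ∈ W l}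

lemma mem_numberedClusters_zero {W : Fin L → Finset V} {x : V} :
    x ∈ numberedClusters W 0 ↔ ∀ l, x ∉ W l := by
  simp [numberedClusters]

lemma numberedClusters_succ (W : Fin L → Finset V) (l : Fin L) :
    numberedClusters W (l + 1) = W l := by
  ext x
  simp [numberedClusters, Fin.val_inj]

lemma disjoint_numberedClusters {W : Fin L → Finset V} (hW : Pairwise (Disjoint on W)) {i j : ℕ}
    (hij : i ≠ j) : Disjoint (numberedClusters W i) (numberedClusters W j) := by
  refine disjoint_left.2 fun x hi hj ↦ ?_
  obtain ⟨rfl, hx⟩ | ⟨l, rfl, hl⟩ := (mem_filter_univ _).1 hi <;>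
    obtain ⟨rfl, hx'⟩ | ⟨l', rfl, hl'⟩ := (mem_filter_univ _).1 hj
  · exact hij rfl
  · exact hx _ hl'
  · exact hx' _ hl
  · exact disjoint_left.1 (hW fun h ↦ hij (by rw [h])) hl hl'

lemma biUnion_numberedClusters (W : Fin L → Finset V) :
    (range (L + 1)).biUnion (numberedClusters W) = univ := by
  refine eq_univ_of_forall fun x ↦ mem_biUnion.2 ?_
  by_cases hx : ∀ l, x ∉ W l
  · exact ⟨0, by simp, mem_numberedClusters_zero.2 hx⟩
  · push Not at hx
    obtain ⟨l, hl⟩ := hx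
    exact ⟨l + 1, by simp, by rwa [numberedClusters_succ]⟩

lemma IsNearPartition.card_numberedClusters_zero_le {W : Fin L → Finset V}
    (hW : IsNearPartition ε W m) : #(numberedClusters W 0) ≤ ε * Fintype.card V := by
  have hzero : numberedClusters W 0 = (univ.biUnion W)ᶜ := by
    ext x
    simp [mem_numberedClusters_zero]
  rw [hzero, card_compl, card_biUnion_of_card_eq hW.card_eq hW.disjoint,
    Nat.cast_sub (by exact_mod_cast hW.mul_le)]
  push_cast
  linarith [hW.le_mul]

theorem stmt19_general {r : ℕ} (L₀ : ℕ) {ε : ℝ} (hε : 0 < ε) :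
    ∃ n₀ : ℕ, ∀ d : ℝ, 0 ≤ d →
    ∀ (V : Type*) [Fintype V], n₀ ≤ Fintype.card V →
    ∀ E : Set (Finset V), (∀ e ∈ E, #e = r + 1) →
    ∃ (L : ℕ) (Vp : ℕ → Finset V) (E' : Set (Finset V)),
      E' ⊆ E ∧
      (∀ i j, i ≠ j → Disjoint (Vp i) (Vp j)) ∧
      (range (L + 1)).biUnion Vp = univ ∧
      L₀ ≤ L ∧ L ≤ n₀ ∧
      #(Vp 0) ≤ ε * Fintype.card V ∧
      (∃ m : ℕ, ∀ i, 1 ≤ i → i ≤ L → #(Vp i) = m) ∧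
      (∀ v : V, (hDeg E v : ℝ) - (d + ε) * Fintype.card V ^ r < hDeg E' v) ∧
      (∀ e ∈ E', ∀ i, 1 ≤ i → i ≤ L → 2 ≤ #(e ∩ Vp i) → (e ∩ Vp 0).Nonempty) ∧
      ∀ t : Fin (r + 1) → ℕ, Injective t → (∀ i, 1 ≤ t i ∧ t i ≤ L) →
        kCount (orderedEdges (r + 1) E') (Vp ∘ t) = 0 ∨
          KReg ε d (orderedEdges (r + 1) E') (Vp ∘ t) := by
  obtain ⟨N, hN⟩ := exists_isNearPartition_hDeg_regularSubgraph (r := r) L₀ hε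
  refine ⟨N, fun d hd V _ hV E hE ↦ ?_⟩
  obtain ⟨L, m, W, hL₀, hLN, hW, hdeg⟩ := hN V hV E hE d hd
  have hindex : ∀ i, 1 ≤ i → i ≤ L → ∃ l : Fin L, i = l + 1 := fun i h1 hi ↦
    ⟨⟨i - 1, by omega⟩, (Nat.sub_add_cancel h1).symm⟩
  refine ⟨L, numberedClusters W, regularSubgraph ε d (r + 1) E W, regularSubgraph_subset,
    fun i j ↦ disjoint_numberedClusters hW.disjoint, biUnion_numberedClusters W, hL₀, hLN,
    hW.card_numberedClusters_zero_le, ⟨m, fun i h1 hi ↦ ?_⟩, hdeg, fun e he i h1 hi hei ↦ ?_,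
    fun t ht hmem ↦ ?_⟩
  · obtain ⟨l, rfl⟩ := hindex i h1 hi
    rw [numberedClusters_succ, hW.card_eq]
  · obtain ⟨l, rfl⟩ := hindex i h1 hi
    rw [numberedClusters_succ] at hei
    obtain ⟨x, hx, hxW⟩ :=
      exists_forall_notMem_of_mem_regularSubgraph hW.disjoint he (hE e he.1) hei
    exact ⟨x, mem_inter.2 ⟨hx, mem_numberedClusters_zero.2 hxW⟩⟩
  · choose s hs using fun i ↦ hindex (t i) (hmem i).1 (hmem i).2
    have hsinj : Injective s := fun i j hij ↦ ht (by rw [hs, hs, hij])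
    have hts : numberedClusters W ∘ t = W ∘ s := funext fun i ↦ by
      rw [comp_apply, hs, numberedClusters_succ, comp_apply]
    rw [hts]
    exact kCount_regularSubgraph_eq_zero_or_kReg hW.disjoint hsinj

end RegularityLemma

section Triples

variable {V : Type*} {ε d : ℝ} {E : Set (Finset V)} {A B C : Finset V}

lemma tripCount_eq_kCount_orderedEdges (E : Set (Finset V)) (A B C : Finset V) :
    tripCount E A B C = kCount (orderedEdges 3 E) ![A, B, C] := by
  have himage : ∀ x : Fin 3 → V, univ.image x = {x 0, x 1, x 2} := fun x ↦ by
    ext; simp [Fin.exists_fin_succ, eq_comm]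
  refine card_nbij' (fun p ↦ ![p.1, p.2.1, p.2.2]) (fun x ↦ (x 0, x 1, x 2)) ?_ ?_ ?_ ?_
  · simp [Set.MapsTo, orderedEdges, himage, Fin.forall_fin_succ]
  · simp [Set.MapsTo, orderedEdges, himage, Fin.forall_fin_succ]
  · exact fun _ _ ↦ rfl
  · exact fun x _ ↦ by ext i; fin_cases i <;> rfl

lemma tripDensity_eq_kDensity_orderedEdges (E : Set (Finset V)) (A B C : Finset V) :
    tripDensity E A B C = kDensity (orderedEdges 3 E) ![A, B, C] := by
  simp [tripDensity, kDensity, tripCount_eq_kCount_orderedEdges, Fin.prod_univ_three]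

lemma KReg.tripReg (h : KReg ε d (orderedEdges 3 E) ![A, B, C]) : TripReg ε d E A B C := by
  simp only [TripReg, tripDensity_eq_kDensity_orderedEdges]
  refine ⟨h.1, fun U₁ h₁ U₂ h₂ U₃ h₃ hc₁ hc₂ hc₃ ↦ h.2 ![U₁, U₂, U₃] ?_ ?_⟩
  · simp [Fin.forall_fin_succ, h₁, h₂, h₃]
  · simp [Fin.forall_fin_succ, hc₁, hc₂, hc₃]

lemma tripCount_eq_zero_or_tripReg {ι : Type*} {P : ι → Finset V} {h i j : ι}
    (hP : kCount (orderedEdges 3 E) (P ∘ ![h, i, j]) = 0 ∨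
      KReg ε d (orderedEdges 3 E) (P ∘ ![h, i, j])) :
    tripCount E (P h) (P i) (P j) = 0 ∨ TripReg ε d E (P h) (P i) (P j) := by
  have htriple : P ∘ ![h, i, j] = ![P h, P i, P j] := by
    ext l : 1
    fin_cases l <;> rfl
  rw [htriple, ← tripCount_eq_kCount_orderedEdges] at hP
  exact hP.imp_right KReg.tripReg

end Triples

/-! ## Statement 19 -/

theorem stmt19 (L₀ : ℕ) (hL₀ : 1 ≤ L₀) (ε : ℝ) (hε : 0 < ε) :
    ∃ n₀ : ℕ, ∀ d : ℝ, 0 ≤ d → d < 1 →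
    ∀ (V : Type) [Fintype V], n₀ ≤ Fintype.card V →
    ∀ E : Set (Finset V), (∀ e ∈ E, e.card = 3) →
    ∃ (L : ℕ) (Vp : ℕ → Finset V) (E' : Set (Finset V)),
      E' ⊆ E ∧
      (∀ i j, i ≠ j → Disjoint (Vp i) (Vp j)) ∧
      ((Finset.range (L + 1)).biUnion Vp = (univ : Finset V)) ∧
      L₀ ≤ L ∧ L ≤ n₀ ∧
      ((Vp 0).card : ℝ) ≤ ε * (Fintype.card V : ℝ) ∧
      (∃ m : ℕ, ∀ i, 1 ≤ i → i ≤ L → (Vp i).card = m) ∧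
      (∀ v : V, (hDeg E v : ℝ) - (d + ε) * (Fintype.card V : ℝ) ^ 2 < (hDeg E' v : ℝ)) ∧
      (∀ e ∈ E', ∀ i, 1 ≤ i → i ≤ L → 2 ≤ (e ∩ Vp i).card → (e ∩ Vp 0).Nonempty) ∧
      (∀ h i j, 1 ≤ h → h ≤ L → 1 ≤ i → i ≤ L → 1 ≤ j → j ≤ L →
        h ≠ i → h ≠ j → i ≠ j →
        tripCount E' (Vp h) (Vp i) (Vp j) = 0 ∨ TripReg ε d E' (Vp h) (Vp i) (Vp j)) := by
  obtain ⟨n₀, h⟩ := stmt19_general (r := 2) L₀ hε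
  refine ⟨n₀, fun d hd _ V _ hV E hE ↦ ?_⟩
  obtain ⟨L, Vp, E', hsub, hdisj, hcover, hL, hLn, hV₀, hcard, hdeg, hcross, hreg⟩ :=
    h d hd V hV E hE
  refine ⟨L, Vp, E', hsub, hdisj, hcover, hL, hLn, hV₀, hcard, hdeg, hcross,
    fun h i j h₁ hh i₁ hi j₁ hj hhi hhj hij ↦ tripCount_eq_zero_or_tripReg <| hreg ![h, i, j] ?_ ?_⟩
  · simp [Injective, Fin.forall_fin_succ, hhi, hhj, hij, hhi.symm, hhj.symm, hij.symm]
  · simp [Fin.forall_fin_succ, h₁, hh, i₁, hi, j₁, hj]
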